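/- Step soundness of RKNL: if k is a reachable configuration of RKNL and k → k', then ⟦k⟧ reduces to a term α-equivalent to ⟦k'⟧ by zero or more normal-order β-steps (⟦k⟧ →*_no =_α ⟦k'⟧); consequently, if the machine started from term t₀ halts with output term t, then t₀ →*_no t' for some t' =_α t with t in β-normal form. -/

import Mathlib

set_option autoImplicit false
set_option maxHeartbeats 1000000

namespace RKNL

/- Pure lambda terms over a type of variables. -/
inductive Tm (V : Type) : Type
  | var : V → Tm V
  | app : Tm V → Tm V → Tm V
  | lam : V → Tm V → Tm V
  deriving DecidableEq

abbrev Ident : Type := ℕ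
abbrev Loc : Type := ℕ

/-- Lookup in an association list (first match). -/
def lookupL {β : Type} : List (ℕ × β) → ℕ → Option β
  | [], _ => none
  | (a, b) :: l, x => if x = a then some b else lookupL l x

/-- Update of an association list. -/
def updL {β : Type} (l : List (ℕ × β)) (x : ℕ) (b : β) : List (ℕ × β) :=
  l.map fun p => if p.1 = x then (x, b) else p

/-- Environments map identifiers to store locations. -/
abbrev Env : Type := List (Ident × Loc)

/-- Closures pair a term with an environment. -/
abbrev Closure : Type := Tm Ident × Env

/-- Values: terms (normal forms), or abstraction closures annotated with a location. -/
inductive Value : Type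
  | tm : Tm Ident → Value
  | abs : Ident → Tm Ident → Env → Loc → Value
  deriving DecidableEq

/-- Storable values (memothunks):
`pend x t e` is the `todo ⊥` placeholder allocated for the abstraction `(λx.t, e)`,
`todo c` an unevaluated argument thunk, `done v` a memoized value. -/
inductive Storable : Type
  | pend : Ident → Tm Ident → Env → Storable
  | todo : Closure → Storable
  | done : Value → Storable
  deriving DecidableEq

/-- Stores map locations to storable values. -/
abbrev Store : Type := List (Loc × Storable)

/-- Stack frames: `arg c` is `(□ c)`, `appL t` is `(t □)`, `lamF x` is `λx.□`,
`cache ℓ` is `ℓ := □`. -/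
inductive Frame : Type
  | arg : Closure → Frame
  | appL : Tm Ident → Frame
  | lamF : Ident → Frame
  | cache : Loc → Frame
  deriving DecidableEq

abbrev Stack : Type := List Frame

/-- Machine configurations: evaluation mode `⟨c, s, σ⟩▸` and continue mode `⟨σ, v, s⟩◂`. -/
inductive Conf : Type
  | eval : Closure → Stack → Store → Conf
  | cont : Store → Value → Stack → Conf

/-- The initial configuration loading a term. -/
def Conf.init (t : Tm Ident) : Conf := .eval (t, []) [] []

def Conf.store : Conf → Store
  | .eval _ _ σ => σ
  | .cont σ _ _ => σ

def Conf.stack : Conf → Stack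
  | .eval _ s _ => s
  | .cont _ _ s => s

/- Identifiers occurring in a configuration (used for freshness of generated names). -/
def tmVars : Tm Ident → List Ident
  | .var x => [x]
  | .app a b => tmVars a ++ tmVars b
  | .lam x t => x :: tmVars t

def envVars (e : Env) : List Ident := e.map Prod.fst

def valVars : Value → List Ident
  | .tm t => tmVars t
  | .abs x t e _ => x :: (tmVars t ++ envVars e)

def storableVars : Storable → List Ident
  | .pend x t e => x :: (tmVars t ++ envVars e)
  | .todo c => tmVars c.1 ++ envVars c.2
  | .done v => valVars v

def frameVars : Frame → List Ident
  | .arg c => tmVars c.1 ++ envVars c.2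
  | .appL t => tmVars t
  | .lamF x => [x]
  | .cache _ => []

def stackVars (s : Stack) : List Ident := s.foldr (fun f acc => frameVars f ++ acc) []

def storeVars (σ : Store) : List Ident := σ.foldr (fun p acc => storableVars p.2 ++ acc) []

def confVars : Conf → List Ident
  | .eval c s σ => tmVars c.1 ++ envVars c.2 ++ stackVars s ++ storeVars σ
  | .cont σ v s => valVars v ++ stackVars s ++ storeVars σ

/-- The top of the stack is not an argument frame. -/
def Stack.noArgTop : Stack → Prop
  | Frame.arg _ :: _ => False
  | _ => True

/-- The top of the stack is not a memoization frame. -/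
def Stack.noCacheTop : Stack → Prop
  | Frame.cache _ :: _ => False
  | _ => True

/-- The eleven transitions of the RKNL abstract machine, indexed by rule number. -/
inductive Step : ℕ → Conf → Conf → Prop
  | r1 {t1 t2 : Tm Ident} {e : Env} {s : Stack} {σ : Store} :
      Step 1 (.eval (.app t1 t2, e) s σ) (.eval (t1, e) (.arg (t2, e) :: s) σ)
  | r2 {x : Ident} {t : Tm Ident} {e : Env} {s : Stack} {σ : Store} {ℓ : Loc}
      (h : lookupL σ ℓ = none) :
      Step 2 (.eval (.lam x t, e) s σ) (.cont ((ℓ, .pend x t e) :: σ) (.abs x t e ℓ) s)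
  | r3 {x : Ident} {e e2 : Env} {s : Stack} {σ : Store} {ℓ : Loc} {t : Tm Ident}
      (he : lookupL e x = some ℓ) (hσ : lookupL σ ℓ = some (.todo (t, e2))) :
      Step 3 (.eval (.var x, e) s σ) (.eval (t, e2) (.cache ℓ :: s) σ)
  | r4done {x : Ident} {e : Env} {s : Stack} {σ : Store} {ℓ : Loc} {v : Value}
      (he : lookupL e x = some ℓ) (hσ : lookupL σ ℓ = some (.done v)) :
      Step 4 (.eval (.var x, e) s σ) (.cont σ v s)
  | r4free {x : Ident} {e : Env} {s : Stack} {σ : Store}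
      (he : lookupL e x = none) :
      Step 4 (.eval (.var x, e) s σ) (.cont σ (.tm (.var x)) s)
  | r5 {σ : Store} {v : Value} {ℓ : Loc} {s : Stack} :
      Step 5 (.cont σ v (.cache ℓ :: s)) (.cont (updL σ ℓ (.done v)) v s)
  | r6 {σ : Store} {x : Ident} {t t2 : Tm Ident} {e e2 : Env} {ℓ ℓ2 : Loc} {s : Stack}
      (h : lookupL σ ℓ2 = none) :
      Step 6 (.cont σ (.abs x t e ℓ) (.arg (t2, e2) :: s))
             (.eval (t, (x, ℓ2) :: e) s ((ℓ2, .todo (t2, e2)) :: σ))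
  | r7 {σ : Store} {x x' x0 : Ident} {t t0 : Tm Ident} {e e0 : Env} {ℓ ℓ2 : Loc} {s : Stack}
      (hσ : lookupL σ ℓ = some (.pend x0 t0 e0))
      (hs1 : Stack.noArgTop s) (hs2 : Stack.noCacheTop s)
      (hℓ2 : lookupL σ ℓ2 = none)
      (hx' : x' ∉ confVars (.cont σ (.abs x t e ℓ) s)) :
      Step 7 (.cont σ (.abs x t e ℓ) s)
             (.eval (t, (x, ℓ2) :: e) (.lamF x' :: .cache ℓ :: s)
                    ((ℓ2, .done (.tm (.var x'))) :: σ))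
  | r8 {σ : Store} {x : Ident} {t : Tm Ident} {e : Env} {ℓ : Loc} {s : Stack} {v : Value}
      (hσ : lookupL σ ℓ = some (.done v))
      (hs1 : Stack.noArgTop s) (hs2 : Stack.noCacheTop s) :
      Step 8 (.cont σ (.abs x t e ℓ) s) (.cont σ v s)
  | r9 {σ : Store} {t t2 : Tm Ident} {e2 : Env} {s : Stack} :
      Step 9 (.cont σ (.tm t) (.arg (t2, e2) :: s)) (.eval (t2, e2) (.appL t :: s) σ)
  | r10 {σ : Store} {t1 t2 : Tm Ident} {s : Stack} :
      Step 10 (.cont σ (.tm t2) (.appL t1 :: s)) (.cont σ (.tm (.app t1 t2)) s)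
  | r11 {σ : Store} {t : Tm Ident} {x : Ident} {s : Stack} :
      Step 11 (.cont σ (.tm t) (.lamF x :: s)) (.cont σ (.tm (.lam x t)) s)

/-- Reachability by machine transitions. -/
inductive Reach (k0 : Conf) : Conf → Prop
  | refl : Reach k0 k0
  | step {k k' : Conf} {r : ℕ} : Reach k0 k → Step r k k' → Reach k0 k'

/- Generic syntax material used by the decoding: variable renaming of terms,
one-hole contexts, neutral/normal terms, normal-order contexts,
capture-avoiding substitution, normal-order reduction and α-equivalence. -/

def Tm.mapVar {V V' : Type} (f : V → V') : Tm V → Tm V'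
  | .var x => .var (f x)
  | .app a b => .app (Tm.mapVar f a) (Tm.mapVar f b)
  | .lam x t => .lam (f x) (Tm.mapVar f t)

/-- Variables of decoded terms: `Sum.inl x` is an ordinary identifier
(free variables and generated fresh names), `Sum.inr x` is the overlined
(marked) copy `x̄`, taken from a disjoint copy of the set of identifiers. -/
abbrev W : Type := Ident ⊕ Ident

/-- Embedding of machine terms into decoded terms. -/
def emb (t : Tm Ident) : Tm W := Tm.mapVar Sum.inl t

/-- One-hole contexts. -/
inductive Ctx (V : Type) : Type
  | hole : Ctx V
  | appL : Ctx V → Tm V → Ctx V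
  | appR : Tm V → Ctx V → Ctx V
  | lam : V → Ctx V → Ctx V

def Ctx.plug {V : Type} : Ctx V → Tm V → Tm V
  | .hole, t => t
  | .appL C u, t => .app (Ctx.plug C t) u
  | .appR u C, t => .app u (Ctx.plug C t)
  | .lam x C, t => .lam x (Ctx.plug C t)

def Ctx.comp {V : Type} : Ctx V → Ctx V → Ctx V
  | .hole, D => D
  | .appL C u, D => .appL (Ctx.comp C D) u
  | .appR u C, D => .appR u (Ctx.comp C D)
  | .lam x C, D => .lam x (Ctx.comp C D)

mutual
  inductive Neutral {V : Type} : Tm V → Prop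
    | var (x : V) : Neutral (.var x)
    | app {a n : Tm V} : Neutral a → NormalTm n → Neutral (.app a n)
  inductive NormalTm {V : Type} : Tm V → Prop
    | lam {x : V} {t : Tm V} : NormalTm t → NormalTm (.lam x t)
    | neu {a : Tm V} : Neutral a → NormalTm a
end

mutual
  inductive NOCtx {V : Type} : Ctx V → Prop
    | bar {C : Ctx V} : NOBar C → NOCtx C
    | lam {x : V} {C : Ctx V} : NOCtx C → NOCtx (.lam x C)
  inductive NOBar {V : Type} : Ctx V → Prop
    | hole : NOBar .hole
    | appL {C : Ctx V} {t : Tm V} : NOBar C → NOBar (.appL C t)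
    | appR {a : Tm V} {C : Ctx V} : Neutral a → NOCtx C → NOBar (.appR a C)
end

/-- `x` occurs free in a term. -/
inductive FreeIn {V : Type} (x : V) : Tm V → Prop
  | var : FreeIn x (.var x)
  | appL {a b : Tm V} : FreeIn x a → FreeIn x (.app a b)
  | appR {a b : Tm V} : FreeIn x b → FreeIn x (.app a b)
  | lam {y : V} {t : Tm V} : x ≠ y → FreeIn x t → FreeIn x (.lam y t)

/-- Capture-avoiding substitution `t{x := u}` (as a relation, allowing
α-renaming of binders that would capture variables of `u`). -/
inductive SubstRel {V : Type} : V → Tm V → Tm V → Tm V → Prop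
  | var_eq {x : V} {u : Tm V} : SubstRel x u (.var x) u
  | var_ne {x y : V} {u : Tm V} : y ≠ x → SubstRel x u (.var y) (.var y)
  | app {x : V} {u a a' b b' : Tm V} : SubstRel x u a a' → SubstRel x u b b' →
      SubstRel x u (.app a b) (.app a' b')
  | lam_same {x : V} {u t : Tm V} : SubstRel x u (.lam x t) (.lam x t)
  | lam {x y : V} {u t t' : Tm V} : y ≠ x → ¬ FreeIn y u → SubstRel x u t t' →
      SubstRel x u (.lam y t) (.lam y t')
  | lam_rename {x y z : V} {u t t0 t' : Tm V} : y ≠ x → FreeIn y u →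
      z ≠ x → ¬ FreeIn z u → ¬ FreeIn z t →
      SubstRel y (.var z) t t0 → SubstRel x u t0 t' →
      SubstRel x u (.lam y t) (.lam z t')

/-- One step of normal-order reduction: β-contraction in a normal-order context. -/
inductive NOStep {V : Type} : Tm V → Tm V → Prop
  | mk {N : Ctx V} {x : V} {b u r : Tm V} :
      NOCtx N → SubstRel x u b r →
      NOStep (N.plug (.app (.lam x b) u)) (N.plug r)

/-- Correspondence of variables under a list of bound-variable renamings. -/
inductive AVar {V : Type} : List (V × V) → V → V → Prop
  | nil {x : V} : AVar [] x x
  | here {x y : V} {ρ : List (V × V)} : AVar ((x, y) :: ρ) x y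
  | there {x y a b : V} {ρ : List (V × V)} :
      x ≠ a → y ≠ b → AVar ρ x y → AVar ((a, b) :: ρ) x y

/-- α-equivalence up to a list of bound-variable renamings. -/
inductive Alpha {V : Type} : List (V × V) → Tm V → Tm V → Prop
  | var {ρ : List (V × V)} {x y : V} : AVar ρ x y → Alpha ρ (.var x) (.var y)
  | app {ρ : List (V × V)} {a a' b b' : Tm V} :
      Alpha ρ a a' → Alpha ρ b b' → Alpha ρ (.app a b) (.app a' b')
  | lam {ρ : List (V × V)} {x y : V} {t t' : Tm V} :
      Alpha ((x, y) :: ρ) t t' → Alpha ρ (.lam x t) (.lam y t')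

/-- α-equivalence: equality up to renaming of bound variables. -/
def AlphaEq {V : Type} (t t' : Tm V) : Prop := Alpha [] t t'

/-- Subterm relation. -/
inductive Subtm {V : Type} : Tm V → Tm V → Prop
  | refl (t : Tm V) : Subtm t t
  | appL {s a b : Tm V} : Subtm s a → Subtm s (.app a b)
  | appR {s a b : Tm V} : Subtm s b → Subtm s (.app a b)
  | lam {s t : Tm V} {x : V} : Subtm s t → Subtm s (.lam x t)

def IsRedex {V : Type} (t : Tm V) : Prop := ∃ (x : V) (b u : Tm V), t = .app (.lam x b) u

/-- β-normal form: no subterm is a β-redex. -/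
def BetaNormal {V : Type} (t : Tm V) : Prop := ∀ s : Tm V, Subtm s t → ¬ IsRedex s

/- The history-dependent decoding of RKNL configurations. -/

/-- `HistFrom k0 H k` : `H` is the full sequence of configurations (oldest
first) of an execution from `k0` to `k`. -/
inductive HistFrom (k0 : Conf) : List Conf → Conf → Prop
  | refl : HistFrom k0 [k0] k0
  | step {H : List Conf} {k k' : Conf} {r : ℕ} :
      HistFrom k0 H k → Step r k k' → HistFrom k0 (H ++ [k']) k'

/-- `initOf H ℓ = some (H', sv)` : in the history `H`, location `ℓ` was
initialized with the storable value `sv`, and `H'` is the prefix of the history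
up to (and including) the configuration where `ℓ` was initialized. -/
def initOf : List Conf → Loc → Option (List Conf × Storable)
  | [], _ => none
  | k :: H, ℓ =>
    match lookupL (Conf.store k) ℓ with
    | some sv => some ([k], sv)
    | none => Option.map (fun p => (k :: p.1, p.2)) (initOf H ℓ)

/-- Decoding environments: an identifier is mapped either to a store location
(`Sum.inl ℓ`) or to an overlined variable `ȳ` (`Sum.inr y`) introduced when
decoding an abstraction. -/
abbrev DEnv : Type := List (Ident × (Loc ⊕ Ident))

def embEnv (e : Env) : DEnv := e.map fun p => (p.1, Sum.inl p.2)

/-- Decoding of closures relative to an execution history: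
`DecC H t e d` means the closure with term `t` and decoding environment `e`
decodes to the term `d` relative to the history `H`. A variable bound to a
location initialized (by rule 6) with an argument thunk decodes to the decoding
of that thunk at the time of initialization; a variable bound to a location
initialized (by rule 7) with a fresh variable decodes to that variable; an
unbound variable decodes to itself. -/
inductive DecC : List Conf → Tm Ident → DEnv → Tm W → Prop
  | app {H : List Conf} {t1 t2 : Tm Ident} {e : DEnv} {d1 d2 : Tm W} :
      DecC H t1 e d1 → DecC H t2 e d2 → DecC H (.app t1 t2) e (.app d1 d2)
  | lam {H : List Conf} {x : Ident} {t : Tm Ident} {e : DEnv} {d : Tm W} :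
      DecC H t ((x, Sum.inr x) :: e) d → DecC H (.lam x t) e (.lam (Sum.inr x) d)
  | var_bar {H : List Conf} {x y : Ident} {e : DEnv} :
      lookupL e x = some (Sum.inr y) → DecC H (.var x) e (.var (Sum.inr y))
  | var_arg {H H' : List Conf} {x : Ident} {e : DEnv} {ℓ : Loc}
      {t2 : Tm Ident} {e2 : Env} {d : Tm W} :
      lookupL e x = some (Sum.inl ℓ) →
      initOf H ℓ = some (H', .todo (t2, e2)) →
      DecC H' t2 (embEnv e2) d →
      DecC H (.var x) e d
  | var_fresh {H H' : List Conf} {x x' : Ident} {e : DEnv} {ℓ : Loc} :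
      lookupL e x = some (Sum.inl ℓ) →
      initOf H ℓ = some (H', .done (.tm (.var x'))) →
      DecC H (.var x) e (.var (Sum.inl x'))
  | var_free {H : List Conf} {x : Ident} {e : DEnv} :
      lookupL e x = none → DecC H (.var x) e (.var (Sum.inl x))

/-- Decoding of values. -/
inductive DecV : List Conf → Value → Tm W → Prop
  | tm {H : List Conf} {t : Tm Ident} : DecV H (.tm t) (emb t)
  | abs {H : List Conf} {x : Ident} {t : Tm Ident} {e : Env} {ℓ : Loc} {d : Tm W} :
      DecC H (.lam x t) (embEnv e) d → DecV H (.abs x t e ℓ) d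

/-- Decoding of stacks into one-hole contexts (memoization frames are ignored). -/
inductive DecS : List Conf → Stack → Ctx W → Prop
  | nil {H : List Conf} : DecS H [] .hole
  | arg {H : List Conf} {t : Tm Ident} {e : Env} {s : Stack} {C : Ctx W} {d : Tm W} :
      DecS H s C → DecC H t (embEnv e) d →
      DecS H (.arg (t, e) :: s) (C.comp (.appL .hole d))
  | appL {H : List Conf} {t : Tm Ident} {s : Stack} {C : Ctx W} :
      DecS H s C → DecS H (.appL t :: s) (C.comp (.appR (emb t) .hole))
  | lamF {H : List Conf} {x : Ident} {s : Stack} {C : Ctx W} :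
      DecS H s C → DecS H (.lamF x :: s) (C.comp (.lam (Sum.inl x) .hole))
  | cache {H : List Conf} {ℓ : Loc} {s : Stack} {C : Ctx W} :
      DecS H s C → DecS H (.cache ℓ :: s) C

/-- Decoding of configurations: the decoded focus is plugged into the decoded stack. -/
inductive DecK : List Conf → Conf → Tm W → Prop
  | eval {H : List Conf} {t : Tm Ident} {e : Env} {s : Stack} {σ : Store}
      {C : Ctx W} {d : Tm W} :
      DecS H s C → DecC H t (embEnv e) d → DecK H (.eval (t, e) s σ) (C.plug d)
  | cont {H : List Conf} {σ : Store} {v : Value} {s : Stack} {C : Ctx W} {d : Tm W} :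
      DecS H s C → DecV H v d → DecK H (.cont σ v s) (C.plug d)

/-! ### De Bruijn terms -/

inductive DB : Type
  | var : ℕ → DB
  | app : DB → DB → DB
  | lam : DB → DB

namespace DB

def upr (f : ℕ → ℕ) : ℕ → ℕ
  | 0 => 0
  | n + 1 => f n + 1

def ren (f : ℕ → ℕ) : DB → DB
  | .var n => .var (f n)
  | .app a b => .app (ren f a) (ren f b)
  | .lam a => .lam (ren (upr f) a)

def ups (θ : ℕ → DB) : ℕ → DB
  | 0 => .var 0
  | n + 1 => ren Nat.succ (θ n)

def sub (θ : ℕ → DB) : DB → DB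
  | .var n => θ n
  | .app a b => .app (sub θ a) (sub θ b)
  | .lam a => .lam (sub (ups θ) a)

def inst (u : DB) : ℕ → DB
  | 0 => u
  | n + 1 => .var n

theorem ren_ren (a : DB) : ∀ (f g : ℕ → ℕ), ren f (ren g a) = ren (f ∘ g) a := by
  induction a with
  | var n => intro f g; rfl
  | app a b iha ihb => intro f g; simp [ren, iha, ihb]
  | lam a ih =>
    intro f g
    simp only [ren, ih]
    congr 2
    funext n
    cases n <;> rfl

theorem sub_ren (a : DB) : ∀ (θ : ℕ → DB) (g : ℕ → ℕ), sub θ (ren g a) = sub (θ ∘ g) a := by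
  induction a with
  | var n => intro f g; rfl
  | app a b iha ihb => intro f g; simp [ren, sub, iha, ihb]
  | lam a ih =>
    intro f g
    simp only [ren, sub, ih]
    congr 2
    funext n
    cases n <;> rfl

theorem ren_sub (a : DB) : ∀ (θ : ℕ → DB) (g : ℕ → ℕ),
    ren g (sub θ a) = sub (fun n => ren g (θ n)) a := by
  induction a with
  | var n => intro f g; rfl
  | app a b iha ihb => intro f g; simp [ren, sub, iha, ihb]
  | lam a ih =>
    intro f g
    simp only [ren, sub, ih]
    congr 2
    funext n
    cases n with
    | zero => rfl
    | succ n =>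
      simp only [ups, ren_ren]
      rfl

theorem sub_var (a : DB) : sub DB.var a = a := by
  have h : ups DB.var = DB.var := by
    funext n
    cases n <;> rfl
  induction a with
  | var n => rfl
  | app a b iha ihb => simp [sub, iha, ihb]
  | lam a ih => simp [sub, h, ih]

theorem ren_id (a : DB) : ren id a = a := by
  have h : upr id = id := by
    funext n
    cases n <;> rfl
  induction a with
  | var n => rfl
  | app a b iha ihb => simp [ren, iha, ihb]
  | lam a ih => simp [ren, h, ih]

theorem ren_inst (u b : DB) (f : ℕ → ℕ) :
    ren f (sub (inst u) b) = sub (inst (ren f u)) (ren (upr f) b) := by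
  rw [ren_sub, sub_ren]
  congr 1
  funext n
  cases n <;> rfl

theorem sub_inst_ren (u a : DB) : sub (inst u) (ren Nat.succ a) = a := by
  rw [sub_ren]
  exact sub_var a

/-- free indices -/
inductive Occ : ℕ → DB → Prop
  | var (n : ℕ) : Occ n (.var n)
  | appL {n : ℕ} {a b : DB} : Occ n a → Occ n (.app a b)
  | appR {n : ℕ} {a b : DB} : Occ n b → Occ n (.app a b)
  | lam {n : ℕ} {a : DB} : Occ (n + 1) a → Occ n (.lam a)

theorem ren_congr (a : DB) : ∀ (f g : ℕ → ℕ), (∀ n, Occ n a → f n = g n) →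
    ren f a = ren g a := by
  induction a with
  | var n => intro f g h; simp [ren, h n (.var n)]
  | app a b iha ihb =>
    intro f g h
    simp only [ren]
    rw [iha f g (fun n hn => h n (.appL hn)), ihb f g (fun n hn => h n (.appR hn))]
  | lam a ih =>
    intro f g h
    simp only [ren]
    rw [ih (upr f) (upr g)]
    intro n hn
    cases n with
    | zero => rfl
    | succ n => simp [upr, h n (.lam hn)]

theorem occ_ren (a : DB) : ∀ (f : ℕ → ℕ) (n : ℕ), Occ n (ren f a) → ∃ k, f k = n ∧ Occ k a := by
  induction a with
  | var m => intro f n h; cases h; exact ⟨m, rfl, .var m⟩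
  | app a b iha ihb =>
    intro f n h
    cases h with
    | appL h => obtain ⟨k, hk, ho⟩ := iha _ _ h; exact ⟨k, hk, .appL ho⟩
    | appR h => obtain ⟨k, hk, ho⟩ := ihb _ _ h; exact ⟨k, hk, .appR ho⟩
  | lam a ih =>
    intro f n h
    cases h with
    | lam h =>
      obtain ⟨k, hk, ho⟩ := ih _ _ h
      cases k with
      | zero => simp [upr] at hk
      | succ k => exact ⟨k, by simpa [upr] using hk, .lam ho⟩

/-- `NF false`: neutral, `NF true`: normal. -/
inductive NF : Bool → DB → Prop
  | var (n : ℕ) : NF false (.var n)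
  | app {a b : DB} : NF false a → NF true b → NF false (.app a b)
  | lam {a : DB} : NF true a → NF true (.lam a)
  | neu {a : DB} : NF false a → NF true a

theorem NF.ren {b : Bool} {a : DB} (h : NF b a) : ∀ f, NF b (DB.ren f a) := by
  induction h with
  | var n => intro f; exact .var _
  | app _ _ iha ihb => intro f; exact .app (iha f) (ihb f)
  | lam _ ih => intro f; exact .lam (ih _)
  | neu _ ih => intro f; exact .neu (ih f)

/-- Normal-order steps; `DS false` does not go below a top-level abstraction. -/
inductive DS : Bool → DB → DB → Prop
  | beta {b u : DB} : DS false (.app (.lam b) u) (sub (inst u) b)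
  | appL {a a' u : DB} : DS false a a' → DS false (.app a u) (.app a' u)
  | appR {a u u' : DB} : NF false a → DS true u u' → DS false (.app a u) (.app a u')
  | lam {a a' : DB} : DS true a a' → DS true (.lam a) (.lam a')
  | bar {a a' : DB} : DS false a a' → DS true a a'

theorem DS.ren {b : Bool} {a a' : DB} (h : DS b a a') : ∀ f, DS b (DB.ren f a) (DB.ren f a') := by
  induction h with
  | beta => intro f; rw [ren_inst]; exact .beta
  | appL _ ih => intro f; exact .appL (ih f)
  | appR hn _ ih => intro f; exact .appR (hn.ren f) (ih f)
  | lam _ ih => intro f; exact .lam (ih _)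
  | bar _ ih => intro f; exact .bar (ih f)

def R (b : Bool) : DB → DB → Prop := Relation.ReflTransGen (DS b)

theorem R.refl (b : Bool) (a : DB) : R b a a := Relation.ReflTransGen.refl

theorem R.trans {b : Bool} {x y z : DB} (h : R b x y) (h' : R b y z) : R b x z :=
  Relation.ReflTransGen.trans h h'

theorem R.map {b b' : Bool} {g : DB → DB} (hg : ∀ x y, DS b x y → DS b' (g x) (g y))
    {x y : DB} (h : R b x y) : R b' (g x) (g y) :=
  by
  induction h with
  | refl => exact R.refl _ _
  | tail _ h ih => exact Relation.ReflTransGen.tail ih (hg _ _ h)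

theorem R.strong {b : Bool} {x y : DB} (h : R b x y) : R true x y := by
  cases b with
  | true => exact h
  | false => exact R.map (g := id) (fun _ _ h => .bar h) h

theorem R.appL {x y u : DB} (h : R false x y) : R false (.app x u) (.app y u) :=
  R.map (g := fun z => DB.app z u) (fun _ _ h => .appL h) h

theorem R.appR {b : Bool} {a x y : DB} (ha : NF false a) (h : R b x y) :
    R false (.app a x) (.app a y) :=
  R.map (g := fun z => DB.app a z) (fun _ _ h => .appR ha h) h.strong

theorem R.lamR {b : Bool} {x y : DB} (f : ℕ → ℕ) (h : R b x y) :
    R true (.lam (DB.ren f x)) (.lam (DB.ren f y)) :=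
  R.map (g := fun z => DB.lam (DB.ren f z)) (fun _ _ h => .lam (h.ren f)) h.strong

end DB

/-! ### Named terms to de Bruijn terms -/

open Classical in
noncomputable def liftV {V : Type} (ρ : V → ℕ) (x : V) : V → ℕ :=
  fun y => if y = x then 0 else ρ y + 1

noncomputable def db {V : Type} : (V → ℕ) → Tm V → DB
  | ρ, .var x => .var (ρ x)
  | ρ, .app a b => .app (db ρ a) (db ρ b)
  | ρ, .lam x t => .lam (db (liftV ρ x) t)

theorem liftV_same {V : Type} (ρ : V → ℕ) (x : V) : liftV ρ x x = 0 := by simp [liftV]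

theorem liftV_ne {V : Type} (ρ : V → ℕ) {x y : V} (h : y ≠ x) : liftV ρ x y = ρ y + 1 := by
  simp [liftV, h]

theorem alpha_of_db {V : Type} (a : Tm V) : ∀ (b : Tm V) (ρ₁ ρ₂ : V → ℕ) (L : List (V × V)),
    (∀ x y, ρ₁ x = ρ₂ y → AVar L x y) → db ρ₁ a = db ρ₂ b → Alpha L a b := by
  induction a with
  | var x =>
    intro b ρ₁ ρ₂ L h e
    cases b <;> simp [db] at e
    exact .var (h _ _ e)
  | app a1 a2 ih1 ih2 =>
    intro b ρ₁ ρ₂ L h e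
    cases b <;> simp [db] at e
    exact .app (ih1 _ _ _ _ h e.1) (ih2 _ _ _ _ h e.2)
  | lam x t ih =>
    intro b ρ₁ ρ₂ L h e
    cases b with
    | var _ => simp [db] at e
    | app _ _ => simp [db] at e
    | lam y t' =>
      simp only [db, DB.lam.injEq] at e
      refine .lam (ih _ _ _ _ ?_ e)
      intro z w hzw
      by_cases hz : z = x
      · by_cases hw : w = y
        · subst hz hw; exact .here
        · subst hz; rw [liftV_same, liftV_ne _ hw] at hzw; omega
      · by_cases hw : w = y
        · subst hw; rw [liftV_same, liftV_ne _ hz] at hzw; omega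
        · rw [liftV_ne _ hz, liftV_ne _ hw] at hzw
          exact .there hz hw (h _ _ (by omega))

/-- Substitution acting on a translated term. -/
theorem sub_db {V : Type} (t : Tm V) : ∀ (ρ ρ₁ : V → ℕ) (θ : ℕ → DB),
    (∀ y, FreeIn y t → θ (ρ₁ y) = .var (ρ y)) → DB.sub θ (db ρ₁ t) = db ρ t := by
  induction t with
  | var x => intro ρ ρ₁ θ h; exact h x .var
  | app a b iha ihb =>
    intro ρ ρ₁ θ h
    simp only [db, DB.sub]
    rw [iha ρ ρ₁ θ (fun y hy => h y (.appL hy)), ihb ρ ρ₁ θ (fun y hy => h y (.appR hy))]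
  | lam x t ih =>
    intro ρ ρ₁ θ h
    simp only [db, DB.sub]
    rw [ih (liftV ρ x)]
    intro y hy
    by_cases hyx : y = x
    · subst hyx; simp [liftV_same, DB.ups]
    · simp [liftV_ne _ hyx, DB.ups, h y (.lam hyx hy), DB.ren]

theorem ren_db {V : Type} (t : Tm V) : ∀ (ρ ρ₁ : V → ℕ) (f : ℕ → ℕ),
    (∀ y, FreeIn y t → f (ρ₁ y) = ρ y) → DB.ren f (db ρ₁ t) = db ρ t := by
  induction t with
  | var x => intro ρ ρ₁ θ h; simp [db, DB.ren, h x .var]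
  | app a b iha ihb =>
    intro ρ ρ₁ θ h
    simp only [db, DB.ren]
    rw [iha ρ ρ₁ θ (fun y hy => h y (.appL hy)), ihb ρ ρ₁ θ (fun y hy => h y (.appR hy))]
  | lam x t ih =>
    intro ρ ρ₁ θ h
    simp only [db, DB.ren]
    rw [ih (liftV ρ x)]
    intro y hy
    by_cases hyx : y = x
    · subst hyx; simp [liftV_same, DB.upr]
    · simp [liftV_ne _ hyx, DB.upr, h y (.lam hyx hy)]

theorem freeIn_subst {V : Type} {x : V} {u t r : Tm V} (h : SubstRel x u t r) :
    ∀ w, FreeIn w r → FreeIn w u ∨ (w ≠ x ∧ FreeIn w t) := by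
  induction h with
  | var_eq => intro w hw; exact .inl hw
  | var_ne hne => intro w hw; cases hw; exact .inr ⟨hne, .var⟩
  | app _ _ iha ihb =>
    intro w hw
    cases hw with
    | appL hw => exact (iha w hw).imp id (fun h => ⟨h.1, .appL h.2⟩)
    | appR hw => exact (ihb w hw).imp id (fun h => ⟨h.1, .appR h.2⟩)
  | lam_same =>
    intro w hw
    cases hw with
    | lam hne hw => exact .inr ⟨hne, .lam hne hw⟩
  | lam hyx hyu _ ih =>
    intro w hw
    cases hw with
    | lam hne hw => exact (ih w hw).imp id (fun h => ⟨h.1, .lam hne h.2⟩)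
  | lam_rename hyx hyu hzx hzu hzt _ _ ih1 ih2 =>
    intro w hw
    cases hw with
    | lam hne hw =>
      rcases ih2 w hw with h | ⟨h1, h2⟩
      · exact .inl h
      · rcases ih1 w h2 with h | ⟨h3, h4⟩
        · cases h; exact absurd rfl hne
        · exact .inr ⟨h1, .lam h3 h4⟩

theorem db_subst {V : Type} {x : V} {u t r : Tm V} (h : SubstRel x u t r) :
    ∀ (ρ ρ₁ : V → ℕ) (θ : ℕ → DB), θ (ρ₁ x) = db ρ u →
      (∀ y, FreeIn y t → y ≠ x → θ (ρ₁ y) = .var (ρ y)) →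
      DB.sub θ (db ρ₁ t) = db ρ r := by
  induction h with
  | var_eq => intro ρ ρ₁ θ h1 h2; exact h1
  | var_ne hne => intro ρ ρ₁ θ h1 h2; exact h2 _ .var hne
  | app _ _ iha ihb =>
    intro ρ ρ₁ θ h1 h2
    simp only [db, DB.sub]
    rw [iha ρ ρ₁ θ h1 (fun y hy => h2 y (.appL hy)), ihb ρ ρ₁ θ h1 (fun y hy => h2 y (.appR hy))]
  | lam_same =>
    intro ρ ρ₁ θ h1 h2
    apply sub_db
    intro y hy
    apply h2 y hy
    cases hy; assumption
  | @lam x y u t t' hyx hyu _ ih =>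
    intro ρ ρ₁ θ h1 h2
    simp only [db, DB.sub]
    rw [ih (liftV ρ y)]
    · rw [liftV_ne _ hyx.symm]
      simp only [DB.ups, h1]
      apply ren_db
      intro w hw
      rw [liftV_ne]
      rintro rfl
      exact hyu hw
    · intro w hw hwx
      by_cases hwy : w = y
      · subst hwy; simp [liftV_same, DB.ups]
      · simp [liftV_ne _ hwy, DB.ups, h2 w (.lam hwy hw) hwx, DB.ren]
  | @lam_rename x y z u t t0 t' hyx hyu hzx hzu hzt hs1 hs2 ih1 ih2 =>
    intro ρ ρ₁ θ h1 h2
    simp only [db, DB.sub]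
    have e : db (liftV ρ₁ y) t = db (liftV ρ₁ z) t0 := by
      rw [← ih1 (liftV ρ₁ z) (liftV ρ₁ y) DB.var, DB.sub_var]
      · simp [liftV_same, db]
      · intro w hw hwy
        have : w ≠ z := by rintro rfl; exact hzt hw
        simp [liftV_ne _ hwy, liftV_ne _ this]
    rw [e, ih2 (liftV ρ z)]
    · rw [liftV_ne _ hzx.symm]
      simp only [DB.ups, h1]
      apply ren_db
      intro w hw
      rw [liftV_ne]
      rintro rfl
      exact hzu hw
    · intro w hw hwx
      by_cases hwz : w = z
      · subst hwz; simp [liftV_same, DB.ups]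
      · have hw' : FreeIn w (Tm.lam y t) := by
          rcases freeIn_subst hs1 w hw with h | ⟨h3, h4⟩
          · cases h; exact absurd rfl hwz
          · exact .lam h3 h4
        simp [liftV_ne _ hwz, DB.ups, h2 w hw' hwx, DB.ren]

def tsize {V : Type} : Tm V → ℕ
  | .var _ => 1
  | .app a b => tsize a + tsize b + 1
  | .lam _ t => tsize t + 1

theorem tsize_subst {V : Type} {x : V} {u t r : Tm V} (h : SubstRel x u t r) :
    ∀ z, u = .var z → tsize r = tsize t := by
  induction h with
  | var_eq => rintro z rfl; rfl
  | var_ne => intros; rfl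
  | app _ _ iha ihb => intro z hz; simp [tsize, iha z hz, ihb z hz]
  | lam_same => intros; rfl
  | lam _ _ _ ih => intro z hz; simp [tsize, ih z hz]
  | lam_rename _ _ _ _ _ _ _ ih1 ih2 =>
    intro z hz
    simp [tsize, ih1 _ rfl, ih2 z hz]

/-- Injective numbering of the variables of decoded terms. -/
def rho : W → ℕ
  | .inl x => 2 * x
  | .inr x => 2 * x + 1

theorem rho_inj {x y : W} (h : rho x = rho y) : x = y := by
  cases x <;> cases y <;> simp [rho] at h ⊢ <;> omega

theorem free_bound (t : Tm W) : ∃ n, ∀ z, FreeIn z t → rho z < n := by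
  induction t with
  | var x =>
    refine ⟨rho x + 1, ?_⟩
    intro z hz; cases hz; omega
  | app a b iha ihb =>
    obtain ⟨n, hn⟩ := iha
    obtain ⟨m, hm⟩ := ihb
    refine ⟨n + m, ?_⟩
    intro z hz
    cases hz with
    | appL h => have := hn z h; omega
    | appR h => have := hm z h; omega
  | lam x t ih =>
    obtain ⟨n, hn⟩ := ih
    refine ⟨n, ?_⟩
    intro z hz
    cases hz with
    | lam _ h => exact hn z h

theorem exists_fresh (x : W) (u t : Tm W) : ∃ z : W, z ≠ x ∧ ¬ FreeIn z u ∧ ¬ FreeIn z t := by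
  obtain ⟨n, hn⟩ := free_bound u
  obtain ⟨m, hm⟩ := free_bound t
  refine ⟨.inl (n + m + rho x + 1), ?_, ?_, ?_⟩
  · intro h
    have h' := congrArg rho h
    simp only [rho] at h'
    omega
  · intro h; have := hn _ h; simp [rho] at this; omega
  · intro h; have := hm _ h; simp [rho] at this; omega

theorem subst_exists (n : ℕ) : ∀ (t : Tm W), tsize t ≤ n → ∀ (x : W) (u : Tm W),
    ∃ r, SubstRel x u t r := by
  induction n with
  | zero => intro t ht; cases t <;> simp [tsize] at ht
  | succ n ih =>
    intro t ht x u
    cases t with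
    | var y =>
      by_cases h : y = x
      · subst h; exact ⟨u, .var_eq⟩
      · exact ⟨_, .var_ne h⟩
    | app a b =>
      simp only [tsize] at ht
      obtain ⟨a', ha⟩ := ih a (by omega) x u
      obtain ⟨b', hb⟩ := ih b (by omega) x u
      exact ⟨_, .app ha hb⟩
    | lam y t =>
      simp only [tsize] at ht
      by_cases h : y = x
      · subst h; exact ⟨_, .lam_same⟩
      · by_cases hu : FreeIn y u
        · obtain ⟨z, hzx, hzu, hzt⟩ := exists_fresh x u t
          obtain ⟨t0, h0⟩ := ih t (by omega) y (.var z)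
          have hs := tsize_subst h0 z rfl
          obtain ⟨t', h'⟩ := ih t0 (by omega) x u
          exact ⟨_, .lam_rename h hu hzx hzu hzt h0 h'⟩
        · obtain ⟨t', h'⟩ := ih t (by omega) x u
          exact ⟨_, .lam h hu h'⟩

theorem nf_of_db (a : Tm W) : ∀ (ρ : W → ℕ), (DB.NF false (db ρ a) → Neutral a) ∧
    (DB.NF true (db ρ a) → NormalTm a) := by
  induction a with
  | var x => intro ρ; exact ⟨fun _ => .var x, fun _ => .neu (.var x)⟩
  | app a b iha ihb =>
    intro ρ
    have h : DB.NF false (db ρ (.app a b)) → Neutral (.app a b) := by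
      intro h
      simp only [db] at h
      cases h with
      | app h1 h2 => exact .app ((iha ρ).1 h1) ((ihb ρ).2 h2)
    refine ⟨h, ?_⟩
    intro h'
    cases h' with
    | neu h' => exact .neu (h h')
  | lam x t ih =>
    intro ρ
    constructor
    · intro h; simp only [db] at h; cases h
    · intro h
      simp only [db] at h
      cases h with
      | lam h => exact .lam ((ih _).2 h)
      | neu h => cases h

def NOb : Bool → Ctx W → Prop
  | true, C => NOCtx C
  | false, C => NOBar C

theorem back_step (a : Tm W) : ∀ (ρ : W → ℕ) (b : Bool) (m : DB), DB.DS b (db ρ a) m →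
    ∃ (N : Ctx W) (x : W) (c u r : Tm W), NOb b N ∧ a = N.plug (.app (.lam x c) u) ∧
      SubstRel x u c r ∧ db ρ (N.plug r) = m := by
  induction a with
  | var x =>
    intro ρ b m h
    simp only [db] at h
    cases h with
    | bar h => cases h
  | app a1 a2 ih1 ih2 =>
    intro ρ b m h
    have key : ∀ m, DB.DS false (db ρ (.app a1 a2)) m →
        ∃ (N : Ctx W) (x : W) (c u r : Tm W), NOBar N ∧
          Tm.app a1 a2 = N.plug (.app (.lam x c) u) ∧
          SubstRel x u c r ∧ db ρ (N.plug r) = m := by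
      intro m h
      simp only [db] at h
      generalize hA : db ρ a1 = A at h
      cases h with
      | @beta bd =>
        cases a1 with
        | var _ => simp [db] at hA
        | app _ _ => simp [db] at hA
        | lam x c =>
          simp only [db, DB.lam.injEq] at hA
          obtain ⟨r, hr⟩ := subst_exists _ c le_rfl x a2
          refine ⟨.hole, x, c, a2, r, .hole, rfl, hr, ?_⟩
          subst hA
          symm
          apply db_subst hr
          · simp [liftV_same, DB.inst]
          · intro y _ hy
            simp [liftV_ne _ hy, DB.inst]
      | @appL _ a' _ h =>
        subst hA
        obtain ⟨N, x, c, u, r, hN, e, hs, hm⟩ := ih1 ρ false _ h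
        refine ⟨.appL N a2, x, c, u, r, .appL hN, by rw [e]; rfl, hs, ?_⟩
        simp only [Ctx.plug, db, hm]
      | appR hn h =>
        subst hA
        obtain ⟨N, x, c, u, r, hN, e, hs, hm⟩ := ih2 ρ true _ h
        refine ⟨.appR a1 N, x, c, u, r, .appR ((nf_of_db _ _).1 hn) hN, by rw [e]; rfl, hs, ?_⟩
        simp only [Ctx.plug, db, hm]
    cases b with
    | false => exact key m h
    | true =>
      cases h with
      | bar h =>
        obtain ⟨N, x, c, u, r, hN, hh⟩ := key m h
        exact ⟨N, x, c, u, r, .bar hN, hh⟩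
  | lam x t ih =>
    intro ρ b m h
    simp only [db] at h
    cases h with
    | lam h =>
      obtain ⟨N, y, c, u, r, hN, e, hs, hm⟩ := ih _ true _ h
      refine ⟨.lam x N, y, c, u, r, .lam hN, by rw [e]; rfl, hs, ?_⟩
      simp only [Ctx.plug, db, hm]
    | bar h => cases h

theorem back_steps {a : Tm W} {m : DB} (h : DB.R true (db rho a) m) :
    ∃ a', Relation.ReflTransGen NOStep a a' ∧ db rho a' = m := by
  induction h with
  | refl => exact ⟨a, .refl, rfl⟩
  | tail _ h ih =>
    obtain ⟨a', h1, h2⟩ := ih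
    rw [← h2] at h
    obtain ⟨N, x, c, u, r, hN, e, hs, hm⟩ := back_step _ _ _ _ h
    refine ⟨_, h1.tail ?_, hm⟩
    rw [e]
    exact .mk hN hs

theorem back_final {a b : Tm W} (h : DB.R true (db rho a) (db rho b)) :
    ∃ a', Relation.ReflTransGen NOStep a a' ∧ AlphaEq a' b := by
  obtain ⟨a', h1, h2⟩ := back_steps h
  refine ⟨a', h1, alpha_of_db _ _ _ _ _ ?_ h2⟩
  intro x y hxy
  rw [rho_inj hxy]
  exact .nil

theorem betaNormal_of_normal {V : Type} {t : Tm V} (h : NormalTm t) : BetaNormal t := by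
  have key : ∀ s t : Tm V, Subtm s t → NormalTm t → NormalTm s := by
    intro s t hs
    induction hs with
    | refl => exact id
    | appL _ ih =>
      intro h
      cases h with
      | neu h => cases h with
        | app h _ => exact ih (.neu h)
    | appR _ ih =>
      intro h
      cases h with
      | neu h => cases h with
        | app _ h => exact ih h
    | lam _ ih =>
      intro h
      cases h with
      | lam h => exact ih h
      | neu h => cases h
  rintro s hs ⟨x, b, u, rfl⟩
  have := key _ _ hs h
  cases this with
  | neu h => cases h with
    | app h _ => cases h

/-! ### Functional decoding -/

def liftE (η : Ident → DB) (x : Ident) : Ident → DB :=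
  fun y => if y = x then .var 0 else DB.ren Nat.succ (η y)

def decB : (Ident → DB) → Tm Ident → DB
  | η, .var x => η x
  | η, .app a b => .app (decB η a) (decB η b)
  | η, .lam x t => .lam (decB (liftE η x) t)

theorem decB_congr (t : Tm Ident) : ∀ (η η' : Ident → DB), (∀ y, FreeIn y t → η y = η' y) →
    decB η t = decB η' t := by
  induction t with
  | var x => intro η η' h; exact h x .var
  | app a b iha ihb =>
    intro η η' h
    simp only [decB]
    rw [iha η η' (fun y hy => h y (.appL hy)), ihb η η' (fun y hy => h y (.appR hy))]
  | lam x t ih =>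
    intro η η' h
    simp only [decB]
    rw [ih _ (liftE η' x)]
    intro y hy
    by_cases hyx : y = x
    · simp [liftE, hyx]
    · simp [liftE, hyx, h y (.lam hyx hy)]

theorem sub_decB (t : Tm Ident) : ∀ (η : Ident → DB) (θ : ℕ → DB),
    DB.sub θ (decB η t) = decB (fun y => DB.sub θ (η y)) t := by
  induction t with
  | var x => intro η θ; rfl
  | app a b iha ihb => intro η θ; simp only [decB, DB.sub, iha, ihb]
  | lam x t ih =>
    intro η θ
    simp only [decB, DB.sub, ih]
    congr 2
    funext y
    by_cases hyx : y = x
    · simp [liftE, hyx, DB.sub, DB.ups]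
    · simp only [liftE, hyx, if_false, DB.sub_ren, DB.ren_sub]
      rfl

theorem ren_decB (t : Tm Ident) : ∀ (η : Ident → DB) (f : ℕ → ℕ),
    DB.ren f (decB η t) = decB (fun y => DB.ren f (η y)) t := by
  induction t with
  | var x => intro η θ; rfl
  | app a b iha ihb => intro η θ; simp only [decB, DB.ren, iha, ihb]
  | lam x t ih =>
    intro η f
    simp only [decB, DB.ren, ih]
    congr 2
    funext y
    by_cases hyx : y = x
    · simp [liftE, hyx, DB.ren, DB.upr]
    · simp only [liftE, hyx, if_false, DB.ren_ren]
      rfl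

theorem occ_decB (t : Tm Ident) : ∀ (η : Ident → DB) (n : ℕ), DB.Occ n (decB η t) →
    ∃ y, FreeIn y t ∧ DB.Occ n (η y) := by
  induction t with
  | var x => intro η n h; exact ⟨x, .var, h⟩
  | app a b iha ihb =>
    intro η n h
    simp only [decB] at h
    cases h with
    | appL h => obtain ⟨y, h1, h2⟩ := iha _ _ h; exact ⟨y, .appL h1, h2⟩
    | appR h => obtain ⟨y, h1, h2⟩ := ihb _ _ h; exact ⟨y, .appR h1, h2⟩
  | lam x t ih =>
    intro η n h
    simp only [decB] at h
    cases h with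
    | lam h =>
      obtain ⟨y, h1, h2⟩ := ih _ _ h
      by_cases hyx : y = x
      · simp only [liftE, hyx, if_true] at h2; cases h2
      · simp only [liftE, hyx, if_false] at h2
        obtain ⟨k, hk, ho⟩ := DB.occ_ren _ _ _ h2
        have : k = n := by simpa using hk
        subst this
        exact ⟨y, .lam hyx h1, ho⟩

def nm (t : Tm Ident) : DB := decB (fun x => .var (2 * x)) t

def cl (n : ℕ) : ℕ → ℕ := fun k => if k = n then 0 else k + 1

theorem nm_lam (x : Ident) (t : Tm Ident) : nm (.lam x t) = .lam (DB.ren (cl (2 * x)) (nm t)) := by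
  simp only [nm, decB, ren_decB]
  congr 2
  funext y
  by_cases h : y = x
  · simp [liftE, h, DB.ren, cl]
  · simp [liftE, h, DB.ren, cl]

theorem nf_decB (t : Tm Ident) : ∀ (f : Ident → ℕ),
    (Neutral t → DB.NF false (decB (fun x => .var (f x)) t)) ∧
    (NormalTm t → DB.NF true (decB (fun x => .var (f x)) t)) := by
  induction t with
  | var x => intro f; exact ⟨fun _ => .var _, fun _ => .neu (.var _)⟩
  | app a b iha ihb =>
    intro f
    have h : Neutral (.app a b) → DB.NF false (decB (fun x => .var (f x)) (.app a b)) := by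
      intro h
      cases h with
      | app h1 h2 => exact .app ((iha f).1 h1) ((ihb f).2 h2)
    refine ⟨h, ?_⟩
    intro h'
    cases h' with
    | neu h' => exact .neu (h h')
  | lam x t ih =>
    intro f
    constructor
    · intro h; cases h
    · intro h
      cases h with
      | lam h =>
        have := (ih (fun y => if y = x then 0 else f y + 1)).2 h
        refine .lam ?_
        convert this using 2
        funext y
        by_cases h : y = x <;> simp [liftE, h, DB.ren]
      | neu h => cases h

theorem nf_nm {t : Tm Ident} (h : Neutral t) : DB.NF false (nm t) := (nf_decB t _).1 h

theorem db_emb (t : Tm Ident) : ∀ ρ : W → ℕ,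
    db ρ (emb t) = decB (fun x => .var (ρ (.inl x))) t := by
  induction t with
  | var x => intro ρ; rfl
  | app a b iha ihb =>
    intro ρ
    have ha := iha ρ
    have hb := ihb ρ
    simp only [emb] at ha hb
    simp only [emb, Tm.mapVar, db, decB, ha, hb]
  | lam x t ih =>
    intro ρ
    have h := ih (liftV ρ (.inl x))
    simp only [emb] at h
    simp only [emb, Tm.mapVar, db, decB, h]
    congr 2
    funext y
    by_cases h : y = x <;> simp [liftE, liftV, h, DB.ren]

theorem db_emb_nm (t : Tm Ident) : db rho (emb t) = nm t := db_emb t rho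

def etaE (m : Loc → DB) (e : Env) : Ident → DB := fun x =>
  match lookupL e x with
  | some ℓ => m ℓ
  | none => .var (2 * x)

def dec (m : Loc → DB) (c : Closure) : DB := decB (etaE m c.2) c.1

def decV (m : Loc → DB) : Value → DB
  | .tm t => nm t
  | .abs x t e _ => dec m (.lam x t, e)

def plugS (m : Loc → DB) : Stack → DB → DB
  | [], d => d
  | .arg c :: s, d => plugS m s (.app d (dec m c))
  | .appL t :: s, d => plugS m s (.app (nm t) d)
  | .lamF x :: s, d => plugS m s (.lam (DB.ren (cl (2 * x)) d))
  | .cache _ :: s, d => plugS m s d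

def decK (m : Loc → DB) : Conf → DB
  | .eval c s _ => plugS m s (dec m c)
  | .cont _ v s => plugS m s (decV m v)

/-! ### Invariants -/

abbrev IMap : Type := Loc → Option Storable

def NotPend : Storable → Prop
  | .pend _ _ _ => False
  | _ => True

def EnvOK (I : IMap) (e : Env) : Prop :=
  ∀ x ℓ, lookupL e x = some ℓ → ∃ sv, I ℓ = some sv ∧ NotPend sv

theorem EnvOK.ne {I : IMap} {e : Env} (h : EnvOK I e) {x : Ident} {ℓ : Loc}
    (hx : lookupL e x = some ℓ) : I ℓ ≠ none := by
  obtain ⟨sv, h1, _⟩ := h x ℓ hx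
  simp [h1]

def VOK (I : IMap) (b : Bool) : Value → Prop
  | .tm t => NormalTm t ∧ (b = false → Neutral t)
  | .abs x t e ℓ => I ℓ = some (.pend x t e)

def IOK (I : IMap) (m : Loc → DB) (d : DB) : Storable → Prop
  | .pend x t e => EnvOK I e ∧ d = dec m (.lam x t, e)
  | .todo c => EnvOK I c.2 ∧ d = dec m c
  | .done v => ∃ x, v = .tm (.var x) ∧ d = .var (2 * x)

def Memo (I : IMap) (m : Loc → DB) (d : DB) (v : Value) : Storable → Prop
  | .pend _ _ _ => VOK I true v ∧ DB.R true d (decV m v)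
  | .todo _ => VOK I false v ∧ DB.R false d (decV m v)
  | .done _ => False

structure Base (I : IMap) (m : Loc → DB) (σ : Store) : Prop where
  init : ∀ ℓ sv, I ℓ = some sv → IOK I m (m ℓ) sv
  none : ∀ ℓ, I ℓ = none → lookupL σ ℓ = none
  some : ∀ ℓ sv, I ℓ = some sv →
    lookupL σ ℓ = some sv ∨ ∃ v, lookupL σ ℓ = some (.done v) ∧ Memo I m (m ℓ) v sv

def SInv (I : IMap) (m : Loc → DB) (D0 : DB) : Stack → Bool → DB → Prop
  | [], _, d => DB.R true D0 d
  | .arg c :: s, b, d => b = false ∧ EnvOK I c.2 ∧ SInv I m D0 s false (.app d (dec m c))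
  | .appL t :: s, _, d => Neutral t ∧ SInv I m D0 s false (.app (nm t) d)
  | .lamF x :: s, _, d => SInv I m D0 s true (.lam (DB.ren (cl (2 * x)) d))
  | .cache ℓ :: s, b, d =>
      (b = false ∧ (∃ c, I ℓ = some (.todo c)) ∧ DB.R false (m ℓ) d ∧ SInv I m D0 s false d) ∨
      ((∃ x t e, I ℓ = some (.pend x t e)) ∧ DB.R true (m ℓ) d ∧ SInv I m D0 s true d)

theorem SInv.mono {I : IMap} {m : Loc → DB} {D0 : DB} (s : Stack) : ∀ {b : Bool} {d : DB},
    SInv I m D0 s b d → SInv I m D0 s false d := by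
  intro b d h
  cases s with
  | nil => exact h
  | cons f s =>
    cases f with
    | arg c => exact ⟨rfl, h.2⟩
    | appL t => exact h
    | lamF x => exact h
    | cache ℓ => exact h.imp (fun h => ⟨rfl, h.2⟩) id

theorem SInv.strengthen {I : IMap} {m : Loc → DB} {D0 : DB} {s : Stack} {b : Bool} {d : DB}
    (h : SInv I m D0 s b d) (h1 : Stack.noArgTop s) (h2 : Stack.noCacheTop s) :
    SInv I m D0 s true d := by
  cases s with
  | nil => exact h
  | cons f s =>
    cases f with
    | arg c => exact h1.elim
    | appL t => exact h
    | lamF x => exact h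
    | cache ℓ => exact h2.elim

theorem SInv.red {I : IMap} {m : Loc → DB} {D0 : DB} (s : Stack) : ∀ {b : Bool} {d d' : DB},
    SInv I m D0 s b d → DB.R b d d' → SInv I m D0 s b d' := by
  induction s with
  | nil => intro b d d' h r; exact DB.R.trans h r.strong
  | cons f s ih =>
    intro b d d' h r
    cases f with
    | arg c =>
      obtain ⟨rfl, h2, h3⟩ := h
      exact ⟨rfl, h2, ih h3 r.appL⟩
    | appL t => exact ⟨h.1, ih h.2 (DB.R.appR (nf_nm h.1) r)⟩
    | lamF x => exact ih (b := true) h (r.lamR _)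
    | cache ℓ =>
      rcases h with ⟨rfl, h2, h3, h4⟩ | ⟨h2, h3, h4⟩
      · exact .inl ⟨rfl, h2, h3.trans r, ih h4 r⟩
      · exact .inr ⟨h2, h3.trans r.strong, ih h4 r.strong⟩

theorem SInv.base {I : IMap} {m : Loc → DB} {D0 : DB} (s : Stack) : ∀ {b : Bool} {d : DB},
    SInv I m D0 s b d → DB.R true D0 (plugS m s d) := by
  induction s with
  | nil => intro b d h; exact h
  | cons f s ih =>
    intro b d h
    cases f with
    | arg c => exact ih h.2.2
    | appL t => exact ih h.2
    | lamF x => exact ih (b := true) h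
    | cache ℓ =>
      rcases h with h | h
      · exact ih h.2.2.2
      · exact ih h.2.2

theorem SInv.rebase {I : IMap} {m : Loc → DB} {D0 : DB} (s : Stack) : ∀ {b : Bool} {d : DB},
    SInv I m D0 s b d → SInv I m (plugS m s d) s b d := by
  induction s with
  | nil => intro b d h; exact DB.R.refl _ _
  | cons f s ih =>
    intro b d h
    cases f with
    | arg c => exact ⟨h.1, h.2.1, ih h.2.2⟩
    | appL t => exact ⟨h.1, ih h.2⟩
    | lamF x => exact ih (b := true) h
    | cache ℓ =>
      rcases h with h | h
      · exact .inl ⟨h.1, h.2.1, h.2.2.1, ih h.2.2.2⟩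
      · exact .inr ⟨h.1, h.2.1, ih h.2.2⟩

theorem SInv.cached {I : IMap} {m : Loc → DB} {D0 : DB} (s : Stack) : ∀ {b : Bool} {d : DB},
    SInv I m D0 s b d → ∀ ℓ, Frame.cache ℓ ∈ s → I ℓ ≠ none := by
  induction s with
  | nil => intro b d h ℓ hℓ; simp at hℓ
  | cons f s ih =>
    intro b d h ℓ hℓ
    cases f with
    | arg c => exact ih h.2.2 ℓ (by simpa using hℓ)
    | appL t => exact ih h.2 ℓ (by simpa using hℓ)
    | lamF x => exact ih (b := true) h ℓ (by simpa using hℓ)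
    | cache ℓ' =>
      rcases List.mem_cons.1 hℓ with h' | h'
      · cases h'
        rcases h with ⟨_, ⟨c, hc⟩, _⟩ | ⟨⟨x, t, e, hc⟩, _⟩ <;> simp [hc]
      · rcases h with h | h
        · exact ih h.2.2.2 ℓ h'
        · exact ih h.2.2 ℓ h'

/-! Extension of the ghost state -/

structure Ext (I : IMap) (m : Loc → DB) (I' : IMap) (m' : Loc → DB) : Prop where
  hI : ∀ ℓ sv, I ℓ = some sv → I' ℓ = some sv
  hm : ∀ ℓ, I ℓ ≠ none → m' ℓ = m ℓ

section ext
variable {I I' : IMap} {m m' : Loc → DB}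

theorem Ext.env (h : Ext I m I' m') {e : Env} (he : EnvOK I e) : EnvOK I' e := by
  intro x ℓ hx
  obtain ⟨sv, hsv, hp⟩ := he x ℓ hx
  exact ⟨sv, h.hI _ _ hsv, hp⟩

theorem Ext.eta (h : Ext I m I' m') {e : Env} (he : EnvOK I e) : etaE m' e = etaE m e := by
  funext x
  simp only [etaE]
  cases hx : lookupL e x with
  | none => rfl
  | some ℓ => exact h.hm ℓ (he.ne hx)

theorem Ext.dec (h : Ext I m I' m') {c : Closure} (he : EnvOK I c.2) : dec m' c = dec m c := by
  simp only [RKNL.dec, h.eta he]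

theorem Ext.vok (h : Ext I m I' m') {b : Bool} {v : Value} (hv : VOK I b v) : VOK I' b v := by
  cases v with
  | tm t => exact hv
  | abs x t e ℓ => exact h.hI _ _ hv

theorem Ext.decV (h : Ext I m I' m') {σ : Store} (hB : Base I m σ) {b : Bool} {v : Value}
    (hv : VOK I b v) : decV m' v = decV m v := by
  cases v with
  | tm t => rfl
  | abs x t e ℓ => exact h.dec (c := (.lam x t, e)) (hB.init _ _ hv).1

theorem Ext.iok (h : Ext I m I' m') {d : DB} {sv : Storable} (hv : IOK I m d sv) :
    IOK I' m' d sv := by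
  cases sv with
  | pend x t e => exact ⟨h.env hv.1, by rw [h.dec (c := (.lam x t, e)) hv.1]; exact hv.2⟩
  | todo c => exact ⟨h.env hv.1, by rw [h.dec hv.1]; exact hv.2⟩
  | done v => exact hv

theorem Ext.memo (h : Ext I m I' m') {σ : Store} (hB : Base I m σ) {d : DB} {sv : Storable}
    {v : Value} (hv : Memo I m d v sv) : Memo I' m' d v sv := by
  cases sv with
  | pend x t e => exact ⟨h.vok hv.1, by rw [h.decV hB hv.1]; exact hv.2⟩
  | todo c => exact ⟨h.vok hv.1, by rw [h.decV hB hv.1]; exact hv.2⟩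
  | done v => exact hv

theorem Ext.sinv (h : Ext I m I' m') {D0 : DB} (s : Stack) : ∀ {b : Bool} {d : DB},
    SInv I m D0 s b d → SInv I' m' D0 s b d := by
  induction s with
  | nil => intro b d h; exact h
  | cons f s ih =>
    intro b d hs
    cases f with
    | arg c => exact ⟨hs.1, h.env hs.2.1, by rw [h.dec hs.2.1]; exact ih hs.2.2⟩
    | appL t => exact ⟨hs.1, ih hs.2⟩
    | lamF x => exact ih (b := true) hs
    | cache ℓ =>
      rcases hs with ⟨h1, ⟨c, hc⟩, h3, h4⟩ | ⟨⟨x, t, e, hc⟩, h3, h4⟩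
      · exact .inl ⟨h1, ⟨c, h.hI _ _ hc⟩, by rw [h.hm ℓ (by simp [hc])]; exact h3, ih h4⟩
      · exact .inr ⟨⟨x, t, e, h.hI _ _ hc⟩, by rw [h.hm ℓ (by simp [hc])]; exact h3, ih h4⟩

theorem ext_alloc {ℓ : Loc} (hℓ : I ℓ = none) (sv : Storable) (d : DB) :
    Ext I m (Function.update I ℓ (some sv)) (Function.update m ℓ d) := by
  constructor
  · intro ℓ' sv' h
    have : ℓ' ≠ ℓ := by rintro rfl; simp [hℓ] at h
    simp [Function.update_of_ne this, h]
  · intro ℓ' h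
    have : ℓ' ≠ ℓ := by rintro rfl; exact h hℓ
    simp [Function.update_of_ne this]

theorem Base.alloc {σ : Store} (hB : Base I m σ) {ℓ : Loc} (hℓ : I ℓ = Option.none)
    {sv : Storable} {d : DB} (hsv : IOK I m d sv) :
    Base (Function.update I ℓ (Option.some sv)) (Function.update m ℓ d) ((ℓ, sv) :: σ) := by
  have hE := ext_alloc (m := m) hℓ sv d
  refine ⟨?_, ?_, ?_⟩
  · intro ℓ' sv' h
    by_cases e : ℓ' = ℓ
    · subst e
      simp only [Function.update_self, Option.some.injEq] at h ⊢
      subst h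
      exact hE.iok hsv
    · simp only [Function.update_of_ne e] at h ⊢
      exact hE.iok (hB.init _ _ h)
  · intro ℓ' h
    by_cases e : ℓ' = ℓ
    · subst e; simp at h
    · simp only [Function.update_of_ne e] at h
      simp [lookupL, e, hB.none _ h]
  · intro ℓ' sv' h
    by_cases e : ℓ' = ℓ
    · subst e
      simp only [Function.update_self, Option.some.injEq] at h
      subst h
      left; simp [lookupL]
    · simp only [Function.update_of_ne e] at h ⊢
      rcases hB.some _ _ h with h' | ⟨v, h1, h2⟩
      · left; simp [lookupL, e, h']
      · right; exact ⟨v, by simp [lookupL, e, h1], hE.memo hB h2⟩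

end ext

theorem lookupL_updL {β : Type} (l : List (ℕ × β)) (x : ℕ) (b : β) (y : ℕ) :
    lookupL (updL l x b) y = if y = x then (lookupL l y).map (fun _ => b) else lookupL l y := by
  induction l with
  | nil => simp [updL, lookupL]
  | cons p l ih =>
    obtain ⟨a, c⟩ := p
    simp only [updL] at ih
    by_cases ha : a = x
    · subst ha
      by_cases hy : y = a
      · subst hy; simp [updL, lookupL]
      · simp [updL, lookupL, hy, ih]
    · by_cases hy : y = a
      · subst hy; simp [updL, lookupL, ha]
      · simp [updL, lookupL, ha, hy, ih]

theorem Base.upd {I : IMap} {m : Loc → DB} {σ : Store} (hB : Base I m σ) {ℓ : Loc} {v : Value}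
    {sv : Storable} (hℓ : I ℓ = Option.some sv) (hM : Memo I m (m ℓ) v sv) :
    Base I m (updL σ ℓ (.done v)) := by
  refine ⟨hB.init, ?_, ?_⟩
  · intro ℓ' h
    rw [lookupL_updL, hB.none _ h]
    simp
  · intro ℓ' sv' h
    rw [lookupL_updL]
    by_cases e : ℓ' = ℓ
    · subst e
      right
      rw [hℓ] at h
      cases h
      refine ⟨v, ?_, hM⟩
      rcases hB.some _ _ hℓ with h' | ⟨w, h', _⟩ <;> simp [h']
    · simp only [e, if_false]
      exact hB.some _ _ h

/-! Names -/

def UC (c : Closure) (z : Ident) : Prop := FreeIn z c.1 ∧ lookupL c.2 z = none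

def UV : Value → Ident → Prop
  | .tm t, z => z ∈ tmVars t
  | .abs _ _ _ _, _ => False

def USt : Storable → Ident → Prop
  | .pend x t e, z => UC (.lam x t, e) z
  | .todo c, z => UC c z
  | .done v, z => UV v z

def UF : Frame → Ident → Prop
  | .arg c, z => UC c z
  | .appL t, z => z ∈ tmVars t
  | .lamF _, _ => False
  | .cache _, _ => False

def UStk : Stack → Ident → Prop
  | [], _ => False
  | f :: s, z => UF f z ∨ UStk s z

def UStore (s : Stack) (σ : Store) (z : Ident) : Prop :=
  ∃ ℓ sv, lookupL σ ℓ = some sv ∧ Frame.cache ℓ ∉ s ∧ USt sv z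

def UK : Conf → Ident → Prop
  | .eval c s σ, z => UC c z ∨ UStk s z ∨ UStore s σ z
  | .cont σ v s, z => UV v z ∨ UStk s z ∨ UStore s σ z

theorem free_vars {z : Ident} {t : Tm Ident} (h : FreeIn z t) : z ∈ tmVars t := by
  induction h with
  | var => simp [tmVars]
  | appL _ ih => simp [tmVars, ih]
  | appR _ ih => simp [tmVars, ih]
  | lam _ _ ih => simp [tmVars, ih]

theorem UStk.vars {s : Stack} {z : Ident} (h : UStk s z) : z ∈ stackVars s := by
  induction s with
  | nil => exact h.elim
  | cons f s ih =>
    have e : stackVars (f :: s) = frameVars f ++ stackVars s := rfl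
    rw [e, List.mem_append]
    rcases h with h | h
    · left
      cases f with
      | arg c => simp [frameVars, free_vars h.1]
      | appL t => exact h
      | lamF x => exact h.elim
      | cache ℓ => exact h.elim
    · exact .inr (ih h)

theorem USt.vars {sv : Storable} {z : Ident} (h : USt sv z) : z ∈ storableVars sv := by
  cases sv with
  | pend x t e =>
    have := free_vars h.1
    simp only [tmVars, List.mem_cons] at this
    simp only [storableVars, List.mem_cons, List.mem_append]
    tauto
  | todo c => simp [storableVars, free_vars h.1]
  | done v =>
    cases v with
    | tm t => exact h
    | abs x t e ℓ => exact h.elim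

theorem store_vars {σ : Store} {ℓ : Loc} {sv : Storable} {z : Ident}
    (h : lookupL σ ℓ = some sv) (hz : z ∈ storableVars sv) : z ∈ storeVars σ := by
  induction σ with
  | nil => simp [lookupL] at h
  | cons p σ ih =>
    obtain ⟨a, b⟩ := p
    have e : storeVars ((a, b) :: σ) = storableVars b ++ storeVars σ := rfl
    rw [e, List.mem_append]
    simp only [lookupL] at h
    by_cases ha : ℓ = a
    · simp only [ha, if_true, Option.some.injEq] at h
      subst h
      exact .inl hz
    · simp only [ha, if_false] at h
      exact .inr (ih h)

theorem UK.vars {k : Conf} {z : Ident} (h : UK k z) : z ∈ confVars k := by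
  cases k with
  | eval c s σ =>
    simp only [confVars, List.mem_append]
    rcases h with h | h | ⟨ℓ, sv, h1, h2, h3⟩
    · have := free_vars h.1; tauto
    · have := h.vars; tauto
    · have := store_vars h1 h3.vars; tauto
  | cont σ v s =>
    simp only [confVars, List.mem_append]
    rcases h with h | h | ⟨ℓ, sv, h1, h2, h3⟩
    · cases v with
      | tm t => exact .inl (.inl h)
      | abs x t e ℓ => exact h.elim
    · have := h.vars; tauto
    · have := store_vars h1 h3.vars; tauto

theorem occ_dec {m : Loc → DB} {c : Closure} {n : ℕ} (h : DB.Occ n (dec m c)) :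
    (∃ z, n = 2 * z ∧ UC c z) ∨ ∃ x ℓ, lookupL c.2 x = some ℓ ∧ DB.Occ n (m ℓ) := by
  obtain ⟨y, h1, h2⟩ := occ_decB _ _ _ h
  simp only [etaE] at h2
  cases hy : lookupL c.2 y with
  | none =>
    simp only [hy] at h2
    cases h2
    exact .inl ⟨y, rfl, h1, hy⟩
  | some ℓ =>
    simp only [hy] at h2
    exact .inr ⟨y, ℓ, hy, h2⟩

def Names (I : IMap) (m : Loc → DB) (U : Ident → Prop) : Prop :=
  ∀ ℓ n, I ℓ ≠ none → DB.Occ n (m ℓ) → ∃ z, n = 2 * z ∧ U z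

theorem Names.mono {I : IMap} {m : Loc → DB} {U U' : Ident → Prop} (h : Names I m U)
    (hU : ∀ z, U z → U' z) : Names I m U' := by
  intro ℓ n h1 h2
  obtain ⟨z, h3, h4⟩ := h ℓ n h1 h2
  exact ⟨z, h3, hU z h4⟩

theorem Names.alloc {I : IMap} {m : Loc → DB} {U U' : Ident → Prop} (h : Names I m U)
    (hU : ∀ z, U z → U' z) {ℓ : Loc} {sv : Storable} {d : DB}
    (hd : ∀ n, DB.Occ n d → ∃ z, n = 2 * z ∧ U' z) :
    Names (Function.update I ℓ (some sv)) (Function.update m ℓ d) U' := by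
  intro ℓ' n h1 h2
  by_cases e : ℓ' = ℓ
  · subst e
    simp only [Function.update_self] at h2
    exact hd n h2
  · simp only [Function.update_of_ne e] at h1 h2
    exact (h.mono hU) ℓ' n h1 h2

theorem Names.dec {I : IMap} {m : Loc → DB} {U : Ident → Prop} (h : Names I m U)
    {c : Closure} (he : EnvOK I c.2) (hc : ∀ z, UC c z → U z) (n : ℕ)
    (hn : DB.Occ n (dec m c)) : ∃ z, n = 2 * z ∧ U z := by
  rcases occ_dec hn with ⟨z, h1, h2⟩ | ⟨x, ℓ, h1, h2⟩
  · exact ⟨z, h1, hc z h2⟩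
  · exact h ℓ n (he.ne h1) h2

def KOK (I : IMap) (m : Loc → DB) (D0 : DB) : Conf → Prop
  | .eval c s _ => EnvOK I c.2 ∧ SInv I m D0 s false (dec m c)
  | .cont _ v s => ∃ b, VOK I b v ∧ SInv I m D0 s b (decV m v)

structure MInv (D0 : DB) (I : IMap) (m : Loc → DB) (k : Conf) : Prop where
  base : Base I m k.store
  names : Names I m (UK k)
  conf : KOK I m D0 k

theorem UStore.alloc {s : Stack} {σ : Store} {z : Ident} {ℓ : Loc} {sv : Storable}
    (hℓ : lookupL σ ℓ = none) (h : UStore s σ z) : UStore s ((ℓ, sv) :: σ) z := by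
  obtain ⟨ℓ', sv', h1, h2, h3⟩ := h
  have : ℓ' ≠ ℓ := by rintro rfl; simp [hℓ] at h1
  exact ⟨ℓ', sv', by simp [lookupL, this, h1], h2, h3⟩

theorem UStore.new {s : Stack} {σ : Store} {z : Ident} {ℓ : Loc} {sv : Storable}
    (hs : Frame.cache ℓ ∉ s) (h : USt sv z) : UStore s ((ℓ, sv) :: σ) z :=
  ⟨ℓ, sv, by simp [lookupL], hs, h⟩

theorem UStore.stack {s s' : Stack} {σ : Store} {z : Ident}
    (hs : ∀ ℓ, Frame.cache ℓ ∈ s' → Frame.cache ℓ ∈ s) (h : UStore s σ z) : UStore s' σ z := by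
  obtain ⟨ℓ', sv', h1, h2, h3⟩ := h
  exact ⟨ℓ', sv', h1, fun h => h2 (hs _ h), h3⟩

/-- Pushing a memoization frame hides the content of one location. -/
theorem UStore.push {s : Stack} {σ : Store} {z : Ident} {ℓ : Loc} {sv : Storable}
    (hℓ : lookupL σ ℓ = some sv) (h : UStore s σ z) :
    USt sv z ∨ UStore (.cache ℓ :: s) σ z := by
  obtain ⟨ℓ', sv', h1, h2, h3⟩ := h
  by_cases e : ℓ' = ℓ
  · subst e
    rw [hℓ] at h1
    cases h1
    exact .inl h3
  · refine .inr ⟨ℓ', sv', h1, ?_, h3⟩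
    simp only [List.mem_cons, not_or]
    refine ⟨?_, h2⟩
    intro hh
    cases hh
    exact e rfl

theorem Base.dom {I : IMap} {m : Loc → DB} {σ : Store} (hB : Base I m σ) {ℓ : Loc}
    (h : lookupL σ ℓ = Option.none) : I ℓ = Option.none := by
  cases hI : I ℓ with
  | none => rfl
  | some sv =>
    rcases hB.some _ _ hI with h' | ⟨v, h', _⟩ <;> simp [h] at h'

/-- A stored thunk is the initial content. -/
theorem Base.todo {I : IMap} {m : Loc → DB} {σ : Store} (hB : Base I m σ) {ℓ : Loc}
    {c : Closure} (h : lookupL σ ℓ = Option.some (.todo c)) : I ℓ = Option.some (.todo c) := by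
  cases hI : I ℓ with
  | none => simp [hB.none _ hI] at h
  | some sv =>
    rcases hB.some _ _ hI with h' | ⟨v, h', _⟩
    · rw [h] at h'; exact h'.symm
    · simp [h] at h'

theorem eta_alloc {I : IMap} {m : Loc → DB} {e : Env} {x : Ident} {ℓ : Loc} {sv : Storable}
    {d : DB} (hℓ : I ℓ = none) (he : EnvOK I e) :
    etaE (Function.update m ℓ d) ((x, ℓ) :: e) = fun y => if y = x then d else etaE m e y := by
  funext y
  have := congrFun ((ext_alloc (m := m) hℓ sv d).eta he) y
  by_cases h : y = x
  · simp [etaE, lookupL, h]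
  · rw [if_neg h, ← this]
    simp [etaE, lookupL, h]

theorem env_alloc {I : IMap} {e : Env} {x : Ident} {ℓ : Loc} {sv : Storable}
    (hp : NotPend sv) (he : EnvOK I e) : EnvOK (Function.update I ℓ (some sv)) ((x, ℓ) :: e) := by
  intro y ℓ' h
  by_cases hl : ℓ' = ℓ
  · subst hl; exact ⟨sv, by simp, hp⟩
  · simp only [Function.update_of_ne hl]
    simp only [lookupL] at h
    by_cases hy : y = x
    · simp only [hy, if_true, Option.some.injEq] at h
      exact absurd h.symm hl
    · simp only [hy, if_false] at h
      exact he _ _ h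

theorem UC.body {x : Ident} {t : Tm Ident} {e : Env} {ℓ : Loc} {z : Ident}
    (h : UC (.lam x t, e) z) : UC (t, (x, ℓ) :: e) z := by
  obtain ⟨h1, h2⟩ := h
  cases h1 with
  | lam hne h1 => exact ⟨h1, by simp only [lookupL, hne, if_false]; exact h2⟩

theorem step_inv {D0 : DB} {I : IMap} {m : Loc → DB} {k k' : Conf} {r : ℕ}
    (h : MInv D0 I m k) (st : Step r k k') :
    ∃ I' m', MInv D0 I' m' k' ∧ (∀ ℓ sv, I ℓ = some sv → I' ℓ = some sv) ∧
      (∀ ℓ, I ℓ = none → I' ℓ = lookupL k'.store ℓ) := by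
  obtain ⟨hB, hN, hK⟩ := h
  have keep : ∀ {k' : Conf}, MInv D0 I m k' →
      ∃ I' m', MInv D0 I' m' k' ∧ (∀ ℓ sv, I ℓ = some sv → I' ℓ = some sv) ∧
      (∀ ℓ, I ℓ = none → I' ℓ = lookupL k'.store ℓ) := by
    intro k' h
    exact ⟨I, m, h, fun _ _ h => h, fun ℓ hℓ => by rw [h.base.none _ hℓ, hℓ]⟩
  have alloc : ∀ {k' : Conf} {ℓ : Loc} {sv : Storable} {d : DB} {σ : Store},
      I ℓ = none → k'.store = (ℓ, sv) :: σ → Base I m σ →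
      MInv D0 (Function.update I ℓ (some sv)) (Function.update m ℓ d) k' →
      ∃ I' m', MInv D0 I' m' k' ∧ (∀ ℓ sv, I ℓ = some sv → I' ℓ = some sv) ∧
      (∀ ℓ, I ℓ = none → I' ℓ = lookupL k'.store ℓ) := by
    intro k' ℓ sv d σ hℓ hk hB' h
    refine ⟨_, _, h, (ext_alloc (m := m) hℓ sv d).hI, ?_⟩
    intro ℓ' hℓ'
    rw [hk]
    by_cases e : ℓ' = ℓ
    · subst e; simp [lookupL]
    · simp [lookupL, e, hℓ', hB'.none _ hℓ']
  cases st with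
  | @r1 t1 t2 e s σ =>
    obtain ⟨he, hs⟩ := hK
    refine keep ⟨hB, hN.mono ?_, he, rfl, he, hs⟩
    rintro z (⟨hz, hz'⟩ | hz | hz)
    · cases hz with
      | appL hz => exact .inl ⟨hz, hz'⟩
      | appR hz => exact .inr (.inl (.inl ⟨hz, hz'⟩))
    · exact .inr (.inl (.inr hz))
    · exact .inr (.inr (hz.stack (by simp)))
  | @r2 x t e s σ ℓ hℓ =>
    obtain ⟨he, hs⟩ := hK
    have hI := hB.dom hℓ
    have hE := ext_alloc (m := m) hI (.pend x t e) (dec m (.lam x t, e))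
    have hc : Frame.cache ℓ ∉ s := fun h => hs.cached s ℓ h hI
    have hU : ∀ z, UK (.eval (.lam x t, e) s σ) z →
        UK (.cont ((ℓ, .pend x t e) :: σ) (.abs x t e ℓ) s) z := by
      rintro z (hz | hz | hz)
      · exact .inr (.inr (.new hc hz))
      · exact .inr (.inl hz)
      · exact .inr (.inr (hz.alloc hℓ))
    refine alloc hI rfl hB ⟨hB.alloc hI (sv := .pend x t e) ⟨he, rfl⟩, ?_, ?_⟩
    · exact hN.alloc hU (fun n hn => (hN.mono hU).dec he (fun z hz => hU z (.inl hz)) n hn)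
    · refine ⟨false, ?_, ?_⟩
      · simp [VOK]
      · show SInv _ _ _ _ _ (dec _ (.lam x t, e))
        rw [hE.dec (c := (.lam x t, e)) he]
        exact hE.sinv s hs
  | @r3 x e e2 s σ ℓ t hx hℓ =>
    obtain ⟨he, hs⟩ := hK
    have hI := hB.todo hℓ
    obtain ⟨he2, hm⟩ := hB.init _ _ hI
    have hd : dec m (.var x, e) = dec m (t, e2) := by
      rw [← hm]; simp [dec, decB, etaE, hx]
    rw [hd] at hs
    refine keep ⟨hB, hN.mono ?_, he2, .inl ⟨rfl, ⟨_, hI⟩, ?_, hs⟩⟩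
    · rintro z (⟨hz, hz'⟩ | hz | hz)
      · cases hz
        simp [hx] at hz'
      · exact .inr (.inl (.inr hz))
      · rcases hz.push hℓ with h | h
        · exact .inl h
        · exact .inr (.inr h)
    · rw [hm]; exact DB.R.refl _ _
  | @r4done x e s σ ℓ v hx hℓ =>
    obtain ⟨he, hs⟩ := hK
    have hd : dec m (.var x, e) = m ℓ := by simp [dec, decB, etaE, hx]
    rw [hd] at hs
    have hU : ∀ z, UK (.eval (.var x, e) s σ) z → UK (.cont σ v s) z := by
      rintro z (⟨hz, hz'⟩ | hz | hz)
      · cases hz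
        simp [hx] at hz'
      · exact .inr (.inl hz)
      · exact .inr (.inr hz)
    refine keep ⟨hB, hN.mono hU, ?_⟩
    replace hB : Base I m σ := hB
    obtain ⟨sv, hI, hp⟩ := he x ℓ hx
    cases sv with
    | pend _ _ _ => exact hp.elim
    | todo c =>
      rcases hB.some _ _ hI with h' | ⟨w, h', hM⟩
      · rw [hℓ] at h'; cases h'
      · rw [hℓ] at h'; cases h'
        exact ⟨false, hM.1, hs.red s hM.2⟩
    | done w =>
      rcases hB.some _ _ hI with h' | ⟨w, h', hM⟩
      · rw [hℓ] at h'; cases h'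
        obtain ⟨x', rfl, hm⟩ := hB.init _ _ hI
        refine ⟨false, ⟨.neu (.var x'), fun _ => .var x'⟩, ?_⟩
        rw [hm] at hs
        exact hs
      · exact hM.elim
  | @r4free x e s σ hx =>
    obtain ⟨he, hs⟩ := hK
    have hd : dec m (.var x, e) = nm (.var x) := by simp [dec, decB, etaE, hx, nm]
    rw [hd] at hs
    refine keep ⟨hB, hN.mono ?_, false, ⟨.neu (.var x), fun _ => .var x⟩, hs⟩
    rintro z (⟨hz, hz'⟩ | hz | hz)
    · cases hz
      exact .inl (by simp [UV, tmVars])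
    · exact .inr (.inl hz)
    · exact .inr (.inr hz)
  | @r5 σ v ℓ s =>
    obtain ⟨b, hv, hs⟩ := hK
    have hU : ∀ z, UK (.cont σ v (.cache ℓ :: s)) z →
        UK (.cont (updL σ ℓ (.done v)) v s) z := by
      rintro z (hz | hz | ⟨ℓ', sv, h1, h2, h3⟩)
      · exact .inl hz
      · rcases hz with hz | hz
        · exact hz.elim
        · exact .inr (.inl hz)
      · refine .inr (.inr ⟨ℓ', sv, ?_, fun h => h2 (List.mem_cons_of_mem _ h), h3⟩)
        have : ℓ' ≠ ℓ := by rintro rfl; simp at h2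
        rw [lookupL_updL, if_neg this, h1]
    rcases hs with ⟨rfl, ⟨c, hI⟩, hr, hs⟩ | ⟨⟨x, t, e, hI⟩, hr, hs⟩
    · exact keep ⟨hB.upd hI ⟨hv, hr⟩, hN.mono hU, false, hv, hs⟩
    · have hv' : VOK I true v := by
        cases v with
        | tm t => exact ⟨hv.1, by simp⟩
        | abs _ _ _ _ => exact hv
      exact keep ⟨hB.upd hI ⟨hv', hr⟩, hN.mono hU, true, hv', hs⟩
  | @r6 σ x t t2 e e2 ℓ ℓ2 s hℓ =>
    obtain ⟨b, hv, rfl, he2, hs⟩ := hK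
    have he : EnvOK I e := (hB.init _ _ hv).1
    have hI := hB.dom hℓ
    have hE := ext_alloc (m := m) hI (.todo (t2, e2)) (dec m (t2, e2))
    have hc : Frame.cache ℓ2 ∉ s := fun h => hs.cached s ℓ2 h hI
    have hU : ∀ z, UK (.cont σ (.abs x t e ℓ) (.arg (t2, e2) :: s)) z →
        UK (.eval (t, (x, ℓ2) :: e) s ((ℓ2, .todo (t2, e2)) :: σ)) z := by
      rintro z (hz | (hz | hz) | hz)
      · exact hz.elim
      · exact .inr (.inr (.new hc hz))
      · exact .inr (.inl hz)
      · exact .inr (.inr ((hz.stack (by simp)).alloc hℓ))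
    refine alloc hI rfl hB ⟨hB.alloc hI (sv := .todo (t2, e2)) ⟨he2, rfl⟩, ?_, ?_⟩
    · exact hN.alloc hU (fun n hn =>
        (hN.mono hU).dec he2 (fun z hz => .inr (.inr (.new hc hz))) n hn)
    · refine ⟨env_alloc trivial he, hE.sinv s (hs.red s ?_)⟩
      refine Relation.ReflTransGen.single ?_
      simp only [decV, dec, decB]
      rw [eta_alloc (sv := .todo (t2, e2)) hI he]
      have : decB (fun y => if y = x then decB (etaE m e2) t2 else etaE m e y) t =
          DB.sub (DB.inst (decB (etaE m e2) t2)) (decB (liftE (etaE m e) x) t) := by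
        rw [sub_decB]
        congr 1
        funext y
        by_cases hy : y = x
        · simp [liftE, hy, DB.sub, DB.inst]
        · simp [liftE, hy, DB.sub_inst_ren]
      rw [this]
      exact .beta
  | @r7 σ x x' x0 t t0 e e0 ℓ ℓ2 s hσ hs1 hs2 hℓ2 hx' =>
    obtain ⟨b, hv, hs⟩ := hK
    have hs := hs.strengthen hs1 hs2
    replace hB : Base I m σ := hB
    obtain ⟨he, hm⟩ := hB.init _ _ hv
    have hI := hB.dom hℓ2
    have hσ' : lookupL σ ℓ = some (.pend x t e) := by
      rcases hB.some _ _ hv with h' | ⟨v, h', _⟩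
      · exact h'
      · rw [hσ] at h'; cases h'
    have hne : ℓ ≠ ℓ2 := by rintro rfl; simp [hℓ2] at hσ
    have hE := ext_alloc (m := m) hI (.done (.tm (.var x'))) (.var (2 * x'))
    have hc : Frame.cache ℓ2 ∉ (.lamF x' :: .cache ℓ :: s : Stack) := by
      simp only [List.mem_cons, not_or]
      refine ⟨by simp, ?_, fun h => hs.cached s ℓ2 h hI⟩
      intro h; cases h; exact hne rfl
    have hU : ∀ z, UK (.cont σ (.abs x t e ℓ) s) z →
        UK (.eval (t, (x, ℓ2) :: e) (.lamF x' :: .cache ℓ :: s)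
                    ((ℓ2, .done (.tm (.var x'))) :: σ)) z := by
      rintro z (hz | hz | hz)
      · exact hz.elim
      · exact .inr (.inl (.inr (.inr hz)))
      · rcases hz.push hσ' with h | h
        · exact .inl (UC.body h)
        · exact .inr (.inr ((h.stack (by simp)).alloc hℓ2))
    refine alloc hI rfl hB
      ⟨hB.alloc hI (sv := .done (.tm (.var x'))) ⟨x', rfl, rfl⟩, ?_, ?_⟩
    · refine hN.alloc hU (fun n hn => ?_)
      cases hn
      exact ⟨x', rfl, .inr (.inr (.new hc (by simp [USt, UV, tmVars])))⟩
    · have hd : DB.lam (DB.ren (cl (2 * x'))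
          (dec (Function.update m ℓ2 (.var (2 * x'))) (t, (x, ℓ2) :: e))) =
          dec m (.lam x t, e) := by
        simp only [dec, decB]
        rw [eta_alloc (sv := .done (.tm (.var x'))) hI he, ren_decB]
        congr 1
        apply decB_congr
        intro y hy
        by_cases hyx : y = x
        · simp [liftE, hyx, DB.ren, cl]
        · simp only [hyx, if_false, liftE]
          apply DB.ren_congr
          intro n hn
          have hn' : n ≠ 2 * x' := by
            rintro rfl
            simp only [etaE] at hn
            cases hl : lookupL e y with
            | none =>
              simp only [hl] at hn
              have : y = x' := by
                generalize hA : 2 * x' = A at hn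
                cases hn
                exact (Nat.eq_of_mul_eq_mul_left (by norm_num) hA).symm
              subst this
              apply hx'
              simp [confVars, valVars, free_vars hy]
            | some ℓ' =>
              simp only [hl] at hn
              obtain ⟨z, hz, hz'⟩ := hN ℓ' _ (he.ne hl) hn
              have : x' = z := Nat.eq_of_mul_eq_mul_left (by norm_num) hz
              subst this
              exact hx' hz'.vars
          simp [cl, hn']
      refine ⟨env_alloc trivial he, ?_⟩
      show SInv _ _ _ (.cache ℓ :: s) true _
      rw [hd]
      refine .inr ⟨⟨x, t, e, hE.hI _ _ hv⟩, ?_, hE.sinv s hs⟩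
      rw [hE.hm ℓ (by rw [show I ℓ = _ from hv]; simp), hm]
      exact DB.R.refl _ _
  | @r8 σ x t e ℓ s v hσ hs1 hs2 =>
    obtain ⟨b, hv, hs⟩ := hK
    have hs := hs.strengthen hs1 hs2
    replace hB : Base I m σ := hB
    obtain ⟨he, hm⟩ := hB.init _ _ hv
    have hM : Memo I m (m ℓ) v (.pend x t e) := by
      rcases hB.some _ _ hv with h' | ⟨v, h', h2⟩
      · rw [hσ] at h'; cases h'
      · rw [hσ] at h'; cases h'; exact h2
    refine keep ⟨hB, hN.mono ?_, true, hM.1, hs.red s ?_⟩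
    · rintro z (hz | hz)
      · exact hz.elim
      · exact .inr hz
    · have := hM.2
      rw [hm] at this
      exact this
  | @r9 σ t t2 e2 s =>
    obtain ⟨b, hv, rfl, he2, hs⟩ := hK
    refine keep ⟨hB, hN.mono ?_, he2, hv.2 rfl, hs⟩
    rintro z (hz | (hz | hz) | hz)
    · exact .inr (.inl (.inl hz))
    · exact .inl hz
    · exact .inr (.inl (.inr hz))
    · exact .inr (.inr (hz.stack (by simp)))
  | @r10 σ t1 t2 s =>
    obtain ⟨b, hv, ht, hs⟩ := hK
    have hn : Neutral (.app t1 t2) := .app ht hv.1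
    refine keep ⟨hB, hN.mono ?_, false, ⟨.neu hn, fun _ => hn⟩, hs⟩
    rintro z (hz | (hz | hz) | hz)
    · exact .inl (List.mem_append_right _ hz)
    · exact .inl (List.mem_append_left _ hz)
    · exact .inr (.inl hz)
    · exact .inr (.inr (hz.stack (by simp)))
  | @r11 σ t x s =>
    obtain ⟨b, hv, hs⟩ := hK
    refine keep ⟨hB, hN.mono ?_, true, ⟨.lam hv.1, by simp⟩, ?_⟩
    · rintro z (hz | (hz | hz) | hz)
      · exact .inl (List.mem_cons_of_mem _ hz)
      · exact hz.elim
      · exact .inr (.inl hz)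
      · exact .inr (.inr (hz.stack (by simp)))
    · show SInv _ _ _ _ _ (nm (.lam x t))
      rw [nm_lam]
      exact hs

/-! ### Histories -/

theorem initOf_append (H : List Conf) (T : List Conf) (ℓ : Loc) :
    initOf (H ++ T) ℓ = (initOf H ℓ).or ((initOf T ℓ).map (fun p => (H ++ p.1, p.2))) := by
  induction H with
  | nil => simp [initOf]
  | cons k H ih =>
    simp only [List.cons_append, initOf]
    cases lookupL k.store ℓ with
    | some sv => simp
    | none =>
      simp only [ih]
      cases initOf H ℓ with
      | some p => simp
      | none => simp [Function.comp_def]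

theorem initOf_prefix (H : List Conf) : ∀ {ℓ : Loc} {H' : List Conf} {sv : Storable},
    initOf H ℓ = some (H', sv) → ∃ T, H = H' ++ T := by
  induction H with
  | nil => intro ℓ H' sv h; simp [initOf] at h
  | cons k H ih =>
    intro ℓ H' sv h
    simp only [initOf] at h
    cases hl : lookupL k.store ℓ with
    | some sv' =>
      simp only [hl, Option.some.injEq, Prod.mk.injEq] at h
      exact ⟨H, by rw [← h.1]; rfl⟩
    | none =>
      simp only [hl, Option.map_eq_some_iff, Prod.mk.injEq] at h
      obtain ⟨p, h1, h2, h3⟩ := h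
      obtain ⟨T, hT⟩ := ih (H' := p.1) (sv := p.2) h1
      exact ⟨T, by rw [← h2, hT]; simp⟩

def HSub (H : List Conf) (I : IMap) : Prop :=
  ∀ ℓ H' sv, initOf H ℓ = some (H', sv) → I ℓ = some sv

theorem HSub.pre {H : List Conf} {I : IMap} (h : HSub H I) {ℓ : Loc} {H' : List Conf}
    {sv : Storable} (h' : initOf H ℓ = some (H', sv)) : HSub H' I := by
  obtain ⟨T, rfl⟩ := initOf_prefix H h'
  intro ℓ' H'' sv' h2
  apply h ℓ' H'' sv'
  rw [initOf_append, h2]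
  rfl

def etaD (ρ : W → ℕ) (f : ℕ → ℕ) (m : Loc → DB) (e : DEnv) : Ident → DB := fun x =>
  match lookupL e x with
  | some (.inl ℓ) => DB.ren f (m ℓ)
  | some (.inr y) => .var (ρ (.inr y))
  | none => .var (f (2 * x))

theorem lookup_embEnv (e : Env) (x : Ident) :
    lookupL (embEnv e) x = (lookupL e x).map Sum.inl := by
  induction e with
  | nil => rfl
  | cons p e ih =>
    simp only [embEnv] at ih
    simp only [embEnv, List.map_cons, lookupL]
    by_cases h : x = p.1
    · simp [h]
    · simp [h, ih]

theorem etaD_emb (ρ : W → ℕ) (f : ℕ → ℕ) (m : Loc → DB) (e : Env) :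
    etaD ρ f m (embEnv e) = fun x => DB.ren f (etaE m e x) := by
  funext x
  simp only [etaD, etaE, lookup_embEnv]
  cases lookupL e x with
  | none => rfl
  | some ℓ => rfl

theorem decC_sound {H : List Conf} {t : Tm Ident} {e : DEnv} {d : Tm W} (h : DecC H t e d)
    {I : IMap} {m : Loc → DB} (hI : ∀ ℓ sv, I ℓ = some sv → IOK I m (m ℓ) sv) :
    HSub H I → (∀ z y, lookupL e z = some (.inr y) → y = z) →
    ∀ (ρ : W → ℕ) (f : ℕ → ℕ), (∀ y, ρ (.inl y) = f (2 * y)) →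
      db ρ d = decB (etaD ρ f m e) t := by
  induction h with
  | app _ _ ih1 ih2 =>
    intro hH he ρ f hρ
    simp only [db, decB, ih1 hH he ρ f hρ, ih2 hH he ρ f hρ]
  | @lam H x t e d _ ih =>
    intro hH he ρ f hρ
    simp only [db, decB]
    rw [ih hH ?_ (liftV ρ (.inr x)) (Nat.succ ∘ f) ?_]
    · congr 2
      funext y
      by_cases hy : y = x
      · subst hy
        simp [etaD, liftE, lookupL, liftV]
      · simp only [etaD, liftE, lookupL, hy, if_false]
        cases hl : lookupL e y with
        | none => rfl
        | some q =>
          cases q with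
          | inl ℓ => simp [DB.ren_ren]
          | inr w =>
            have := he _ _ hl
            subst this
            simp [liftV, hy, DB.ren]
    · intro z y hz
      simp only [lookupL] at hz
      by_cases h : z = x
      · simp only [h, if_true, Option.some.injEq, Sum.inr.injEq] at hz
        rw [h, hz]
      · simp only [h, if_false] at hz
        exact he _ _ hz
    · intro y
      simp [liftV, hρ]
  | var_bar hl =>
    intro hH he ρ f hρ
    simp [db, decB, etaD, hl]
  | @var_arg H H' x e ℓ t2 e2 d hl hi _ ih =>
    intro hH he ρ f hρ
    have hm := (hI _ _ (hH _ _ _ hi)).2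
    rw [ih (hH.pre hi) ?_ ρ f hρ]
    · rw [etaD_emb, ← ren_decB]
      simp only [decB, etaD, hl]
      rw [hm]
      rfl
    · intro z y hz
      rw [lookup_embEnv] at hz
      simp at hz
  | @var_fresh H H' x x' e ℓ hl hi =>
    intro hH he ρ f hρ
    obtain ⟨y, hy, hm⟩ := hI _ _ (hH _ _ _ hi)
    cases hy
    simp [db, decB, etaD, hl, hm, hρ, DB.ren]
  | var_free hl =>
    intro hH he ρ f hρ
    simp [db, decB, etaD, hl, hρ]

section sound
variable {H : List Conf} {I : IMap} {m : Loc → DB}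

theorem decC_dec (hI : ∀ ℓ sv, I ℓ = some sv → IOK I m (m ℓ) sv) (hH : HSub H I)
    {t : Tm Ident} {e : Env} {d : Tm W} (h : DecC H t (embEnv e) d) :
    db rho d = dec m (t, e) := by
  rw [decC_sound h hI hH ?_ rho id (fun _ => rfl), etaD_emb]
  · simp only [DB.ren_id]
    rfl
  · intro z y hz
    rw [lookup_embEnv] at hz
    simp at hz

theorem decV_sound (hI : ∀ ℓ sv, I ℓ = some sv → IOK I m (m ℓ) sv) (hH : HSub H I)
    {v : Value} {d : Tm W} (h : DecV H v d) : db rho d = decV m v := by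
  cases h with
  | tm => exact db_emb_nm _
  | abs h => exact decC_dec hI hH h

theorem plug_comp (C : Ctx W) : ∀ (D : Ctx W) (t : Tm W),
    (C.comp D).plug t = C.plug (D.plug t) := by
  induction C with
  | hole => intro D t; rfl
  | appL C u ih => intro D t; simp [Ctx.comp, Ctx.plug, ih]
  | appR u C ih => intro D t; simp [Ctx.comp, Ctx.plug, ih]
  | lam x C ih => intro D t; simp [Ctx.comp, Ctx.plug, ih]

theorem decS_sound (hI : ∀ ℓ sv, I ℓ = some sv → IOK I m (m ℓ) sv) (hH : HSub H I)
    {s : Stack} {C : Ctx W} (h : DecS H s C) :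
    ∀ d, db rho (C.plug d) = plugS m s (db rho d) := by
  induction h with
  | nil => intro d; rfl
  | arg _ hc ih =>
    intro d
    rw [plug_comp, ih]
    simp only [plugS, Ctx.plug, db, decC_dec hI hH hc]
  | appL _ ih =>
    intro d
    rw [plug_comp, ih]
    simp only [plugS, Ctx.plug, db, db_emb_nm]
  | @lamF x _ _ _ ih =>
    intro d
    rw [plug_comp, ih]
    simp only [plugS, Ctx.plug, db]
    congr 2
    symm
    apply ren_db
    intro y _
    by_cases hy : y = .inl x
    · subst hy; simp [cl, liftV, rho]
    · have : rho y ≠ 2 * x := fun h => hy (rho_inj h)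
      simp [cl, liftV, hy, this]
  | cache _ ih => intro d; exact ih d

theorem decK_sound (hI : ∀ ℓ sv, I ℓ = some sv → IOK I m (m ℓ) sv) (hH : HSub H I)
    {k : Conf} {d : Tm W} (h : DecK H k d) : db rho d = decK m k := by
  cases h with
  | eval hs hc => rw [decS_sound hI hH hs, decC_dec hI hH hc]; rfl
  | cont hs hv => rw [decS_sound hI hH hs, decV_sound hI hH hv]; rfl

end sound

theorem HSub.step {H : List Conf} {I I' : IMap} {k' : Conf} (h : HSub H I)
    (hn : ∀ ℓ, initOf H ℓ = none → I ℓ = none)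
    (h1 : ∀ ℓ sv, I ℓ = some sv → I' ℓ = some sv)
    (h2 : ∀ ℓ, I ℓ = none → I' ℓ = lookupL k'.store ℓ) :
    HSub (H ++ [k']) I' ∧ ∀ ℓ, initOf (H ++ [k']) ℓ = none → I' ℓ = none := by
  constructor
  · intro ℓ H' sv hi
    rw [initOf_append] at hi
    cases hl : initOf H ℓ with
    | some p =>
      rw [hl] at hi
      simp only [Option.some_or, Option.some.injEq] at hi
      subst hi
      exact h1 _ _ (h _ _ _ hl)
    | none =>
      rw [h2 _ (hn _ hl)]
      rw [hl] at hi
      simp only [initOf] at hi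
      cases hk : lookupL k'.store ℓ with
      | none => simp [hk] at hi
      | some sv' =>
        simp only [hk, Option.none_or, Option.map_some, Option.some.injEq, Prod.mk.injEq] at hi
        rw [hi.2]
  · intro ℓ hi
    rw [initOf_append] at hi
    simp only [Option.or_eq_none_iff] at hi
    rw [h2 _ (hn _ hi.1)]
    cases hk : lookupL k'.store ℓ with
    | none => rfl
    | some sv' => simp [initOf, hk] at hi

theorem MInv.rebase {D0 : DB} {I : IMap} {m : Loc → DB} {k : Conf} (h : MInv D0 I m k) :
    MInv (decK m k) I m k := by
  refine ⟨h.base, h.names, ?_⟩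
  have hK := h.conf
  cases k with
  | eval c s σ => exact ⟨hK.1, hK.2.rebase s⟩
  | cont σ v s =>
    obtain ⟨b, h1, h2⟩ := hK
    exact ⟨b, h1, h2.rebase s⟩

theorem MInv.reach {D0 : DB} {I : IMap} {m : Loc → DB} {k : Conf} (h : MInv D0 I m k) :
    DB.R true D0 (decK m k) := by
  have hK := h.conf
  cases k with
  | eval c s σ => exact hK.2.base s
  | cont σ v s =>
    obtain ⟨b, h1, h2⟩ := hK
    exact h2.base s

theorem hist_inv {t0 : Tm Ident} {H : List Conf} {k : Conf} (h : HistFrom (Conf.init t0) H k) :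
    ∃ I m, MInv (nm t0) I m k ∧ HSub H I ∧ ∀ ℓ, initOf H ℓ = none → I ℓ = none := by
  induction h with
  | refl =>
    refine ⟨fun _ => none, fun _ => .var 0, ⟨⟨?_, ?_, ?_⟩, ?_, ?_⟩, ?_, ?_⟩
    · intro ℓ sv h; cases h
    · intro ℓ h; rfl
    · intro ℓ sv h; cases h
    · intro ℓ n h; exact absurd rfl h
    · refine ⟨?_, ?_⟩
      · intro x ℓ h; cases h
      · exact DB.R.refl _ _
    · intro ℓ H' sv h; cases h
    · intro ℓ _; rfl
  | step _ st ih =>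
    obtain ⟨I, m, h1, h2, h3⟩ := ih
    obtain ⟨I', m', h4, h5, h6⟩ := step_inv h1 st
    exact ⟨I', m', h4, h2.step h3 h5 h6⟩

/-- Step soundness of RKNL: any transition from a reachable configuration is
decoded to zero or more normal-order β-steps followed by an α-renaming;
consequently, if the machine started from `t0` halts with output term `t`, then
`t0` normal-order reduces to a term α-equivalent to `t`, and `t` is in β-normal
form. -/
theorem step_soundness :
    (∀ (t0 : Tm Ident) (H : List Conf) (k k' : Conf) (r : ℕ) (d d' : Tm W),
        HistFrom (Conf.init t0) H k → Step r k k' →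
        DecK H k d → DecK (H ++ [k']) k' d' →
        ∃ d'' : Tm W, Relation.ReflTransGen NOStep d d'' ∧ AlphaEq d'' d') ∧
    (∀ (t0 : Tm Ident) (H : List Conf) (σ : Store) (t : Tm Ident),
        HistFrom (Conf.init t0) H (.cont σ (.tm t) []) →
        (∀ (r : ℕ) (k' : Conf), ¬ Step r (Conf.cont σ (.tm t) []) k') →
        BetaNormal t ∧
        ∃ t' : Tm W, Relation.ReflTransGen NOStep (emb t0) t' ∧ AlphaEq t' (emb t)) := by
  refine ⟨?_, ?_⟩
  · intro t0 H k k' r d d' hH st hd hd'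
    obtain ⟨I, m, h1, h2, h3⟩ := hist_inv hH
    obtain ⟨I', m', h4, h5, h6⟩ := step_inv h1.rebase st
    have h7 := (h2.step h3 h5 h6).1
    apply back_final
    rw [decK_sound h1.base.init h2 hd, decK_sound h4.base.init h7 hd']
    exact h4.reach
  · intro t0 H σ t hH _
    obtain ⟨I, m, h1, h2, h3⟩ := hist_inv hH
    obtain ⟨b, hv, _⟩ := h1.conf
    refine ⟨betaNormal_of_normal hv.1, ?_⟩
    apply back_final
    rw [db_emb_nm, db_emb_nm]
    exact h1.reach

end RKNL
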